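/- arXiv:2512.19605 — 7 statements merged into one kernel-verified Lean document; each statement's English description precedes it below -/
import Mathlib

section
/- Let P be a probability measure on ℝ with characteristic function φ_P(ω) = E_{x~P}[e^{iωx}], let σ > 0 and Q = N(0, σ²) the centered Gaussian measure on ℝ with characteristic function φ_Q(ω) = e^{−σ²ω²/2}, and let γ > 0 with ρ(ω) = (4πγ)^{−1/2} e^{−ω²/(4γ)}. Then ∫_ℝ |φ_P(ω) − φ_Q(ω)|² ρ(ω) dω = E_{x,x'~P⊗P}[e^{−γ(x−x')²}] + E_{y,y'~Q⊗Q}[e^{−γ(y−y')²}] − 2 E_{x~P, y~Q}[e^{−γ(x−y)²}]; that is, the Epps–Pulley functional EP(P) = ∫_ℝ |φ_P(ω) − φ_Q(ω)|² ρ(ω) dω equals the squared maximum mean discrepancy MMD²_{k_γ}(P, N(0,σ²)) for the Gaussian kernel. -/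
open MeasureTheory ProbabilityTheory Real Complex

/-!
The spectral density `ρ` is the density of `ξ = N(0, 2γ)`, whose characteristic function is
`t ↦ exp (-γ t²)`. For probability measures `μ, ν`, the product `φ_μ * conj φ_ν` is the
characteristic function of the law `D` of `x - y` under `μ ⊗ ν`, and Fubini
(`integral_charFun_swap`) gives `∫ φ_D dξ = ∫ φ_ξ dD = E_{μ ⊗ ν} exp (-γ (x - y)²)`
(`integral_charFun_mul_conj`). Expanding
`‖φ_P - φ_Q‖² = φ_P conj φ_P + φ_Q conj φ_Q - 2 Re (φ_P conj φ_Q)` and applying this to the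
pairs `(P, P)`, `(Q, Q)`, `(P, Q)` gives the theorem.
-/

lemma integral_charFun_swap (D ξ : Measure ℝ) [IsFiniteMeasure D] [IsFiniteMeasure ξ] :
    ∫ ω, charFun D ω ∂ξ = ∫ x, charFun ξ x ∂D := by
  simp_rw [charFun_apply_real]
  rw [integral_integral_swap]
  · simp_rw [mul_comm]
  · refine Integrable.of_bound (C := 1) ?_ ?_
    · exact Continuous.aestronglyMeasurable (by fun_prop)
    · refine Filter.Eventually.of_forall fun p => ?_
      have h := Complex.norm_exp_ofReal_mul_I (p.1 * p.2)
      push_cast at h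
      exact h.le

/-- The product on the left is the characteristic function of `μ ∗ ν.map Neg.neg`, the law of
`x - y` under `μ ⊗ ν`. -/
lemma integral_charFun_mul_conj (μ ν ξ : Measure ℝ) [IsProbabilityMeasure μ]
    [IsProbabilityMeasure ν] [IsProbabilityMeasure ξ] :
    ∫ ω, charFun μ ω * (starRingEnd ℂ) (charFun ν ω) ∂ξ
      = ∫ x, ∫ y, charFun ξ (x - y) ∂ν ∂μ := by
  have hneg : IsProbabilityMeasure (ν.map (fun y => -1 * y)) :=
    Measure.isProbabilityMeasure_map (by fun_prop)
  have h1 : ∀ ω, charFun μ ω * (starRingEnd ℂ) (charFun ν ω)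
      = charFun (μ ∗ ν.map (fun y => -1 * y)) ω := by
    intro ω
    rw [charFun_conv, charFun_map_mul, ← charFun_neg, neg_one_mul]
  simp_rw [h1]
  rw [integral_charFun_swap, integral_conv]
  · congr 1
    ext x
    rw [integral_map (by fun_prop)]
    · simp [sub_eq_add_neg]
    · exact ((measurable_charFun (μ := ξ)).comp (by fun_prop)).aestronglyMeasurable
  · exact Integrable.of_bound (C := 1) (measurable_charFun (μ := ξ)).aestronglyMeasurable
      (Filter.Eventually.of_forall fun x => norm_charFun_le_one x)

lemma integrable_charFun_mul_conj (μ ν ξ : Measure ℝ) [IsProbabilityMeasure μ]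
    [IsProbabilityMeasure ν] [IsProbabilityMeasure ξ] :
    Integrable (fun ω => charFun μ ω * (starRingEnd ℂ) (charFun ν ω)) ξ := by
  refine Integrable.of_bound (C := 1) ?_ (Filter.Eventually.of_forall fun x => ?_)
  · exact ((measurable_charFun (μ := μ)).mul
      (Complex.continuous_conj.measurable.comp
        (measurable_charFun (μ := ν)))).aestronglyMeasurable
  · rw [norm_mul, RCLike.norm_conj]
    exact mul_le_one₀ (norm_charFun_le_one x) (norm_nonneg _) (norm_charFun_le_one x)

/-- Real form of `integral_charFun_mul_conj` for `ξ = N(0, v)` with `v = 2γ`. -/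
lemma integral_re_charFun_mul_conj (μ ν : Measure ℝ) [IsProbabilityMeasure μ]
    [IsProbabilityMeasure ν] (γ : ℝ) (v : NNReal) (hv : (v : ℝ) = 2 * γ) :
    ∫ ω, (charFun μ ω * (starRingEnd ℂ) (charFun ν ω)).re ∂(gaussianReal 0 v)
      = ∫ x, ∫ y, Real.exp (-γ * (x - y) ^ 2) ∂ν ∂μ := by
  have h1 : ∀ t : ℝ, charFun (gaussianReal 0 v) t = ((Real.exp (-γ * t ^ 2) : ℝ) : ℂ) := by
    intro t
    rw [charFun_gaussianReal]
    push_cast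
    have : ((v : ℝ) : ℂ) = 2 * γ := by rw [hv]; push_cast; rfl
    rw [this]
    congr 1
    ring
  have h2 := integral_charFun_mul_conj μ ν (gaussianReal 0 v)
  simp_rw [h1, integral_complex_ofReal] at h2
  have h3 := integral_re (integrable_charFun_mul_conj μ ν (gaussianReal 0 v))
  rw [h2] at h3
  simpa using h3

/-- The variance of the Gaussian is a free `s : NNReal` with `s = σ²`, so that rewriting does
not meet the anonymous constructor `⟨σ ^ 2, _⟩`. -/
lemma epps_pulley_aux (P : Measure ℝ) [IsProbabilityMeasure P] (σ γ : ℝ) (s : NNReal)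
    (hs : (s : ℝ) = σ ^ 2) (hγ : 0 < γ) :
    (∫ ω : ℝ,
      ‖(∫ x : ℝ, Complex.exp (Complex.I * (ω : ℂ) * (x : ℂ)) ∂P)
          - (Real.exp (-(σ ^ 2 * ω ^ 2) / 2) : ℂ)‖ ^ 2
        * ((4 * Real.pi * γ) ^ (-(1 : ℝ) / 2) * Real.exp (-(ω ^ 2) / (4 * γ))))
    = (∫ x : ℝ, ∫ x' : ℝ, Real.exp (-γ * (x - x') ^ 2) ∂P ∂P)
      + (∫ y : ℝ, ∫ y' : ℝ, Real.exp (-γ * (y - y') ^ 2)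
          ∂(gaussianReal 0 s) ∂(gaussianReal 0 s))
      - 2 * ∫ x : ℝ, ∫ y : ℝ, Real.exp (-γ * (x - y) ^ 2)
          ∂(gaussianReal 0 s) ∂P := by
  set Q := gaussianReal 0 s with hQ
  have hQprob : IsProbabilityMeasure Q := by rw [hQ]; infer_instance
  set v : NNReal := ⟨2 * γ, by positivity⟩ with hvdef
  have hv : (v : ℝ) = 2 * γ := rfl
  have hv0 : v ≠ 0 := by
    intro h
    have : (v : ℝ) = 0 := by rw [h]; rfl
    linarith
  have hφP : ∀ ω : ℝ, ∫ x : ℝ, Complex.exp (Complex.I * (ω : ℂ) * (x : ℂ)) ∂P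
      = charFun P ω := by
    intro ω
    rw [charFun_apply_real]
    congr 1
    ext x
    congr 1
    ring
  have hφQ : ∀ ω : ℝ, (Real.exp (-(σ ^ 2 * ω ^ 2) / 2) : ℂ) = charFun Q ω := by
    intro ω
    rw [hQ, charFun_gaussianReal]
    have hs' : ((s : ℝ) : ℂ) = (σ : ℂ) ^ 2 := by rw [hs]; push_cast; rfl
    rw [hs']
    push_cast
    congr 1
    ring
  have hρ : ∀ ω : ℝ, (4 * Real.pi * γ) ^ (-(1 : ℝ) / 2) * Real.exp (-(ω ^ 2) / (4 * γ))
      = gaussianPDFReal 0 v ω := by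
    intro ω
    rw [gaussianPDFReal, hv, neg_div, Real.rpow_neg (by positivity), ← Real.sqrt_eq_rpow]
    ring_nf
  simp_rw [hφP, hφQ, hρ]
  have hL : ∫ ω : ℝ, ‖charFun P ω - charFun Q ω‖ ^ 2 * gaussianPDFReal 0 v ω
      = ∫ ω, ‖charFun P ω - charFun Q ω‖ ^ 2 ∂(gaussianReal 0 v) := by
    rw [integral_gaussianReal_eq_integral_smul hv0]
    simp_rw [smul_eq_mul, mul_comm]
  have hexp : ∀ a b : ℂ, ‖a - b‖ ^ 2 = (a * (starRingEnd ℂ) a).re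
      + (b * (starRingEnd ℂ) b).re - 2 * (a * (starRingEnd ℂ) b).re := by
    intro a b
    rw [← Complex.normSq_eq_norm_sq, Complex.normSq_sub, Complex.mul_conj, Complex.mul_conj,
      Complex.ofReal_re, Complex.ofReal_re]
  have hi := fun (μ ν : Measure ℝ) (_ : IsProbabilityMeasure μ) (_ : IsProbabilityMeasure ν) =>
    (integrable_charFun_mul_conj μ ν (gaussianReal 0 v)).re
  rw [hL]
  simp_rw [hexp]
  rw [integral_sub, integral_add, integral_const_mul,
    integral_re_charFun_mul_conj P P γ v hv, integral_re_charFun_mul_conj Q Q γ v hv,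
    integral_re_charFun_mul_conj P Q γ v hv]
  · exact hi P P inferInstance inferInstance
  · exact hi Q Q inferInstance inferInstance
  · exact (hi P P inferInstance inferInstance).add (hi Q Q inferInstance inferInstance)
  · exact (hi P Q inferInstance inferInstance).const_mul 2

/-- **Epps–Pulley functional = squared Gaussian-kernel MMD.**
For a probability measure `P` on `ℝ`, the Gaussian prior `Q = N(0, σ²)` with
characteristic function `φ_Q(ω) = exp(−σ²ω²/2)`, and the Gaussian spectral density
`ρ(ω) = (4πγ)^{−1/2} exp(−ω²/(4γ))`, the integral
`∫ |φ_P(ω) − φ_Q(ω)|² ρ(ω) dω` equals the expanded-form squared MMD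
`E_{P⊗P}[e^{−γ(x−x')²}] + E_{Q⊗Q}[e^{−γ(y−y')²}] − 2 E_{P⊗Q}[e^{−γ(x−y)²}]`. -/
theorem epps_pulley_is_mmd
    (P : Measure ℝ) [IsProbabilityMeasure P] (σ γ : ℝ) (hσ : 0 < σ) (hγ : 0 < γ) :
    (∫ ω : ℝ,
      ‖(∫ x : ℝ, Complex.exp (Complex.I * (ω : ℂ) * (x : ℂ)) ∂P)
          - (Real.exp (-(σ ^ 2 * ω ^ 2) / 2) : ℂ)‖ ^ 2
        * ((4 * Real.pi * γ) ^ (-(1 : ℝ) / 2) * Real.exp (-(ω ^ 2) / (4 * γ))))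
    = (∫ x : ℝ, ∫ x' : ℝ, Real.exp (-γ * (x - x') ^ 2) ∂P ∂P)
      + (∫ y : ℝ, ∫ y' : ℝ, Real.exp (-γ * (y - y') ^ 2)
          ∂(gaussianReal 0 ⟨σ ^ 2, sq_nonneg σ⟩) ∂(gaussianReal 0 ⟨σ ^ 2, sq_nonneg σ⟩))
      - 2 * ∫ x : ℝ, ∫ y : ℝ, Real.exp (-γ * (x - y) ^ 2)
          ∂(gaussianReal 0 ⟨σ ^ 2, sq_nonneg σ⟩) ∂P := by
  exact epps_pulley_aux P σ γ ⟨σ ^ 2, sq_nonneg σ⟩ rfl hγ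
end

section
/- Let P be a probability measure on ℝ^d, let γ, σ > 0, and let G = N(0, σ² I_d) be the centered isotropic Gaussian measure on ℝ^d. Then MMD²_{k_γ}(P, G) = E_{x,x'~P⊗P}[e^{−γ‖x−x'‖²}] − 2(1 + 2γσ²)^{−d/2} E_{x~P}[exp(−γ‖x‖²/(1 + 2γσ²))] + (1 + 4γσ²)^{−d/2}, where MMD²_{k_γ} denotes the squared maximum mean discrepancy in expanded form with the Gaussian kernel k_γ(x,y) = exp(−γ‖x−y‖²). In particular, E_{y,y'~G⊗G}[e^{−γ‖y−y'‖²}] = (1 + 4γσ²)^{−d/2} and for every x ∈ ℝ^d, E_{y~G}[e^{−γ‖x−y‖²}] = (1 + 2γσ²)^{−d/2} exp(−γ‖x‖²/(1 + 2γσ²)). -/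
open MeasureTheory ProbabilityTheory Real

/-!
In one dimension, completing the square turns `exp (-γ (x - y)²)` times the `N(0, σ²)` density into
a constant multiple of an unnormalised Gaussian density in `y`, whose mass is the Gaussian integral
(`integral_kernel_gaussianReal`). Both the kernel and the measure `N(0, σ² I_d)` are products over
coordinates, which gives the `d`-dimensional cross term (`integral_kernel_pi_gaussianReal`).

For the `G ⊗ G` term, the inner integral is again a Gaussian kernel between `y` and `0`, with
bandwidth `γ / (1 + 2γσ²)`; a second application of the cross-term formula at `x = 0` and the
identity `(1 + 2γσ²) (1 + 2 (γ / (1 + 2γσ²)) σ²) = 1 + 4γσ²` conclude. The MMD formula is then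
obtained by substitution.
-/

/-- One-dimensional Gaussian convolution: the kernel mean embedding of `N(0, σ²)` at `x`.
The variance is a separate variable `v` with `v = σ²`, so that nothing depends on how `σ²` is built
as an element of `NNReal`. -/
lemma integral_kernel_gaussianReal {γ σ : ℝ} {v : NNReal}
    (hγ : 0 < γ) (hσ : 0 < σ) (hv : (v : ℝ) = σ ^ 2) (x : ℝ) :
    ∫ y, Real.exp (-γ * (x - y) ^ 2) ∂(gaussianReal 0 v)
      = (1 + 2 * γ * σ ^ 2) ^ (-(1 : ℝ) / 2)
        * Real.exp (-γ * x ^ 2 / (1 + 2 * γ * σ ^ 2)) := by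
  have hv0 : v ≠ 0 := by
    rintro rfl
    exact (pow_pos hσ 2).ne hv
  have hs : 0 < 1 + 2 * γ * σ ^ 2 := by positivity
  rw [integral_gaussianReal_eq_integral_smul hv0]
  -- Completing the square, with centre `2γσ²x / (1 + 2γσ²)` and precision `(1 + 2γσ²) / σ²`.
  have key : ∀ y : ℝ, gaussianPDFReal 0 v y • Real.exp (-γ * (x - y) ^ 2)
      = ((√(2 * π * σ ^ 2))⁻¹ * Real.exp (-γ * x ^ 2 / (1 + 2 * γ * σ ^ 2)))
        * (fun z => Real.exp (-((1 + 2 * γ * σ ^ 2) / (2 * σ ^ 2)) * z ^ 2))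
          (y - 2 * γ * σ ^ 2 * x / (1 + 2 * γ * σ ^ 2)) := by
    intro y
    simp only [gaussianPDFReal, smul_eq_mul, hv]
    rw [mul_assoc (√_)⁻¹, mul_assoc (√_)⁻¹, ← Real.exp_add, ← Real.exp_add]
    congr 2
    field_simp
    ring
  simp_rw [key]
  rw [integral_const_mul,
    integral_sub_right_eq_self
      (fun z => Real.exp (-((1 + 2 * γ * σ ^ 2) / (2 * σ ^ 2)) * z ^ 2)),
    integral_gaussian]
  have hc : (√(2 * π * σ ^ 2))⁻¹ * √(π / ((1 + 2 * γ * σ ^ 2) / (2 * σ ^ 2)))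
      = (1 + 2 * γ * σ ^ 2) ^ (-(1 : ℝ) / 2) := by
    rw [neg_div, Real.rpow_neg hs.le, ← Real.sqrt_eq_rpow, ← Real.sqrt_inv, ← Real.sqrt_inv,
      ← Real.sqrt_mul (by positivity)]
    congr 1
    field_simp
  rw [← hc]
  ring

lemma integral_kernel_pi_gaussianReal {d : ℕ} {γ σ : ℝ} {v : NNReal}
    (hγ : 0 < γ) (hσ : 0 < σ) (hv : (v : ℝ) = σ ^ 2) (x : Fin d → ℝ) :
    ∫ y, Real.exp (-γ * ∑ i, (x i - y i) ^ 2)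
        ∂(Measure.pi fun _ : Fin d => gaussianReal 0 v)
      = (1 + 2 * γ * σ ^ 2) ^ (-(d : ℝ) / 2)
        * Real.exp (-γ * (∑ i, x i ^ 2) / (1 + 2 * γ * σ ^ 2)) := by
  have hs : 0 < 1 + 2 * γ * σ ^ 2 := by positivity
  simp_rw [Finset.mul_sum, Real.exp_sum]
  rw [integral_fintype_prod_eq_prod (𝕜 := ℝ) (fun i y => Real.exp (-γ * (x i - y) ^ 2))]
  simp_rw [integral_kernel_gaussianReal hγ hσ hv]
  rw [Finset.prod_mul_distrib, ← Real.exp_sum, Finset.prod_const, Finset.card_univ,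
    Fintype.card_fin, ← Real.rpow_natCast, ← Real.rpow_mul hs.le, Finset.sum_div]
  congr 2
  ring

lemma integral_kernel_pi_gaussianReal_prod {d : ℕ} {γ σ : ℝ} {v : NNReal}
    (hγ : 0 < γ) (hσ : 0 < σ) (hv : (v : ℝ) = σ ^ 2) :
    ∫ y, ∫ y', Real.exp (-γ * ∑ i, (y i - y' i) ^ 2)
        ∂(Measure.pi fun _ : Fin d => gaussianReal 0 v)
        ∂(Measure.pi fun _ : Fin d => gaussianReal 0 v)
      = (1 + 4 * γ * σ ^ 2) ^ (-(d : ℝ) / 2) := by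
  have hs : 0 < 1 + 2 * γ * σ ^ 2 := by positivity
  have hγ' : 0 < γ / (1 + 2 * γ * σ ^ 2) := by positivity
  have h0 := integral_kernel_pi_gaussianReal (d := d) hγ' hσ hv 0
  simp only [Pi.zero_apply, zero_sub, neg_sq, ne_eq, OfNat.ofNat_ne_zero, not_false_eq_true,
    zero_pow, Finset.sum_const_zero, mul_zero, zero_div, Real.exp_zero, mul_one] at h0
  have hrw : ∀ y : Fin d → ℝ, Real.exp (-γ * (∑ i, y i ^ 2) / (1 + 2 * γ * σ ^ 2))
      = Real.exp (-(γ / (1 + 2 * γ * σ ^ 2)) * ∑ i, y i ^ 2) := by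
    intro y
    congr 1
    ring
  simp_rw [integral_kernel_pi_gaussianReal hγ hσ hv]
  rw [integral_const_mul]
  simp_rw [hrw]
  rw [h0, ← Real.mul_rpow hs.le (by positivity)]
  congr 1
  field_simp
  ring

/-- **Closed form of the Gaussian-kernel MMD to an isotropic Gaussian prior.**
For a probability measure `P` on `ℝ^d` and `G = N(0, σ²I_d)` (the `d`-fold product of
`N(0,σ²)`), the expanded-form squared MMD with kernel `k_γ(x,y) = exp(−γ‖x−y‖²)` equals
`E_{P⊗P}[e^{−γ‖x−x'‖²}] − 2(1+2γσ²)^{−d/2} E_P[exp(−γ‖x‖²/(1+2γσ²))] + (1+4γσ²)^{−d/2}`;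
in particular the `G⊗G` term equals `(1+4γσ²)^{−d/2}` and the cross term against `G` has the
stated closed form. Here `‖x‖² = ∑ i, (x i)²`. -/
theorem mmd_gaussian_prior_closed_form
    (d : ℕ) (P : Measure (Fin d → ℝ)) [IsProbabilityMeasure P] (γ σ : ℝ)
    (hγ : 0 < γ) (hσ : 0 < σ) :
    ((∫ x, ∫ x', Real.exp (-γ * ∑ i, (x i - x' i) ^ 2) ∂P ∂P)
      + (∫ y, ∫ y', Real.exp (-γ * ∑ i, (y i - y' i) ^ 2)
          ∂(Measure.pi fun _ : Fin d => gaussianReal 0 ⟨σ ^ 2, sq_nonneg σ⟩)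
          ∂(Measure.pi fun _ : Fin d => gaussianReal 0 ⟨σ ^ 2, sq_nonneg σ⟩))
      - 2 * ∫ x, ∫ y, Real.exp (-γ * ∑ i, (x i - y i) ^ 2)
          ∂(Measure.pi fun _ : Fin d => gaussianReal 0 ⟨σ ^ 2, sq_nonneg σ⟩) ∂P
      = (∫ x, ∫ x', Real.exp (-γ * ∑ i, (x i - x' i) ^ 2) ∂P ∂P)
        - 2 * (1 + 2 * γ * σ ^ 2) ^ (-(d : ℝ) / 2)
            * ∫ x, Real.exp (-γ * (∑ i, x i ^ 2) / (1 + 2 * γ * σ ^ 2)) ∂P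
        + (1 + 4 * γ * σ ^ 2) ^ (-(d : ℝ) / 2))
    ∧ ((∫ y, ∫ y', Real.exp (-γ * ∑ i, (y i - y' i) ^ 2)
          ∂(Measure.pi fun _ : Fin d => gaussianReal 0 ⟨σ ^ 2, sq_nonneg σ⟩)
          ∂(Measure.pi fun _ : Fin d => gaussianReal 0 ⟨σ ^ 2, sq_nonneg σ⟩))
        = (1 + 4 * γ * σ ^ 2) ^ (-(d : ℝ) / 2))
    ∧ (∀ x : Fin d → ℝ,
        (∫ y, Real.exp (-γ * ∑ i, (x i - y i) ^ 2)
            ∂(Measure.pi fun _ : Fin d => gaussianReal 0 ⟨σ ^ 2, sq_nonneg σ⟩))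
          = (1 + 2 * γ * σ ^ 2) ^ (-(d : ℝ) / 2)
            * Real.exp (-γ * (∑ i, x i ^ 2) / (1 + 2 * γ * σ ^ 2))) := by
  have hcross := fun x : Fin d → ℝ =>
    integral_kernel_pi_gaussianReal (v := ⟨σ ^ 2, sq_nonneg σ⟩) hγ hσ rfl x
  have hprod :=
    integral_kernel_pi_gaussianReal_prod (d := d) (v := ⟨σ ^ 2, sq_nonneg σ⟩) hγ hσ rfl
  refine ⟨?_, hprod, hcross⟩
  erw [hprod, integral_congr_ae (Filter.Eventually.of_forall hcross)]
  rw [integral_const_mul]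
  ring
end

section
/- Let P be a probability measure on ℝ^d, let s : ℝ^d → ℝ^d be a measurable function (the score of the target), and let ρ : ℝ^d → [0, ∞) be measurable. Assume the integrability condition ∫∫∫ (‖s(x)‖ + ‖ω‖)(‖s(x')‖ + ‖ω‖) ρ(ω) dω dP(x) dP(x') < ∞. Then ∫_{ℝ^d} ∫_{ℝ^d} [ ∫_{ℝ^d} ⟨ s(x) + iω, conj(s(x') + iω) ⟩_{ℂ^d} e^{iω·(x − x')} ρ(ω) dω ] dP(x) dP(x') = ∫_{ℝ^d} ‖ ∫_{ℝ^d} (s(x) + iω) e^{iω·x} dP(x) ‖²_{ℂ^d} ρ(ω) dω. (This is the spectral representation of the squared kernel Stein discrepancy: for a shift-invariant kernel k with spectral density ρ_k, the left-hand side equals E_{x,x'~P⊗P}[k_stein(x,x')] = KSD²_k(P, Q) for a target Q with score s.) -/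
/-!
Put `g_j(x, ω) = (s(x)_j + i ω_j) e^{iω·x}`. Since `e^{iω·(x - x')} = e^{iω·x} conj(e^{iω·x'})`, the
integrand on the left is `∑_j g_j(x, ω) conj(g_j(x', ω)) ρ(ω)`. As `|g_j(x, ω)| ≤ ‖s(x)‖ + ‖ω‖`, each
summand is integrable for `(P ⊗ P) ⊗ volume` (`integrable_steinTerm`), so Fubini's theorem allows
`ω` to be integrated last. For fixed `ω` the integral over `(x, x')` factors as
`(∫ g_j dP) conj(∫ g_j dP) = |∫ g_j dP|²`; this holds for Bochner integrals without any
integrability of `g_j(·, ω)`, so no integrability of `s` has to be extracted.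
-/

open MeasureTheory Real Complex

/-- The `j`-th coordinate of `(s(x) + iω) e^{iω·x}`. -/
noncomputable def steinFeature {d : ℕ} (s : EuclideanSpace ℝ (Fin d) → EuclideanSpace ℝ (Fin d))
    (j : Fin d) (x ω : EuclideanSpace ℝ (Fin d)) : ℂ :=
  ((s x j : ℂ) + Complex.I * (ω j : ℂ))
    * Complex.exp (Complex.I * ((∑ i : Fin d, ω i * x i : ℝ) : ℂ))

lemma measurable_steinFeature {d : ℕ}
    {s : EuclideanSpace ℝ (Fin d) → EuclideanSpace ℝ (Fin d)} (hs : Measurable s) (j : Fin d) :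
    Measurable fun p : EuclideanSpace ℝ (Fin d) × EuclideanSpace ℝ (Fin d) =>
      steinFeature s j p.1 p.2 := by
  have h1 : Measurable fun p : EuclideanSpace ℝ (Fin d) × EuclideanSpace ℝ (Fin d) =>
      s p.1 j := by fun_prop
  unfold steinFeature
  fun_prop

lemma norm_steinFeature_le {d : ℕ} (s : EuclideanSpace ℝ (Fin d) → EuclideanSpace ℝ (Fin d))
    (j : Fin d) (x ω : EuclideanSpace ℝ (Fin d)) :
    ‖steinFeature s j x ω‖ ≤ ‖s x‖ + ‖ω‖ := by
  unfold steinFeature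
  rw [norm_mul, mul_comm Complex.I ((∑ i : Fin d, ω i * x i : ℝ) : ℂ),
    Complex.norm_exp_ofReal_mul_I, mul_one]
  refine (norm_add_le _ _).trans ?_
  rw [norm_mul, Complex.norm_I, one_mul, Complex.norm_real, Complex.norm_real]
  exact add_le_add (PiLp.norm_apply_le (s x) j) (PiLp.norm_apply_le ω j)

lemma steinFeature_mul_conj {d : ℕ} (s : EuclideanSpace ℝ (Fin d) → EuclideanSpace ℝ (Fin d))
    (j : Fin d) (x x' ω : EuclideanSpace ℝ (Fin d)) :
    steinFeature s j x ω * (starRingEnd ℂ) (steinFeature s j x' ω)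
      = ((s x j : ℂ) + Complex.I * (ω j : ℂ))
          * (starRingEnd ℂ) ((s x' j : ℂ) + Complex.I * (ω j : ℂ))
          * Complex.exp (Complex.I * ((∑ i : Fin d, ω i * (x i - x' i) : ℝ) : ℂ)) := by
  have h : Complex.exp (Complex.I * ((∑ i : Fin d, ω i * (x i - x' i) : ℝ) : ℂ))
      = Complex.exp (Complex.I * ((∑ i : Fin d, ω i * x i : ℝ) : ℂ))
        * (starRingEnd ℂ) (Complex.exp (Complex.I * ((∑ i : Fin d, ω i * x' i : ℝ) : ℂ))) := by
    rw [← Complex.exp_conj, ← Complex.exp_add, map_mul, Complex.conj_I, Complex.conj_ofReal]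
    congr 1
    simp only [mul_sub, Finset.sum_sub_distrib, Complex.ofReal_sub]
    ring
  rw [h]
  unfold steinFeature
  rw [map_mul]
  ring

lemma integrable_steinTerm {d : ℕ} {P : Measure (EuclideanSpace ℝ (Fin d))}
    [IsProbabilityMeasure P]
    {s : EuclideanSpace ℝ (Fin d) → EuclideanSpace ℝ (Fin d)} (hs : Measurable s)
    {ρ : EuclideanSpace ℝ (Fin d) → ℝ} (hρ : Measurable ρ) (hρ0 : ∀ ω, 0 ≤ ρ ω)
    (hint : (∫⁻ x, ∫⁻ x', ∫⁻ ω,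
        ENNReal.ofReal ((‖s x‖ + ‖ω‖) * (‖s x'‖ + ‖ω‖) * ρ ω) ∂volume ∂P ∂P) < ⊤) (j : Fin d) :
    Integrable (fun p : (EuclideanSpace ℝ (Fin d) × EuclideanSpace ℝ (Fin d)) ×
        EuclideanSpace ℝ (Fin d) =>
      steinFeature s j p.1.1 p.2 * (starRingEnd ℂ) (steinFeature s j p.1.2 p.2) * (ρ p.2 : ℂ))
      ((P.prod P).prod volume) := by
  have hdom : Measurable fun p : (EuclideanSpace ℝ (Fin d) × EuclideanSpace ℝ (Fin d)) ×
      EuclideanSpace ℝ (Fin d) =>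
      ENNReal.ofReal ((‖s p.1.1‖ + ‖p.2‖) * (‖s p.1.2‖ + ‖p.2‖) * ρ p.2) := by fun_prop
  refine ⟨Measurable.aestronglyMeasurable ?_, ?_⟩
  · have h1 := (measurable_steinFeature hs j).comp
      (f := fun p : (EuclideanSpace ℝ (Fin d) × EuclideanSpace ℝ (Fin d)) ×
        EuclideanSpace ℝ (Fin d) => (p.1.1, p.2)) (by fun_prop)
    have h2 := (measurable_steinFeature hs j).comp
      (f := fun p : (EuclideanSpace ℝ (Fin d) × EuclideanSpace ℝ (Fin d)) ×
        EuclideanSpace ℝ (Fin d) => (p.1.2, p.2)) (by fun_prop)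
    have h3 : Measurable (starRingEnd ℂ) := Complex.continuous_conj.measurable
    exact (h1.mul (h3.comp h2)).mul (by fun_prop)
  · rw [hasFiniteIntegral_iff_norm]
    refine lt_of_le_of_lt (lintegral_mono (g := fun p => ENNReal.ofReal
      ((‖s p.1.1‖ + ‖p.2‖) * (‖s p.1.2‖ + ‖p.2‖) * ρ p.2)) fun p => ?_) ?_
    · refine ENNReal.ofReal_le_ofReal ?_
      rw [norm_mul, norm_mul, RCLike.norm_conj, Complex.norm_real, Real.norm_of_nonneg (hρ0 _)]
      have := hρ0 p.2
      gcongr <;> exact norm_steinFeature_le _ _ _ _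
    · rw [lintegral_prod _ hdom.aemeasurable,
        lintegral_prod _ hdom.lintegral_prod_right'.aemeasurable]
      exact hint

/-- **Spectral representation of the squared kernel Stein discrepancy.**
For a probability measure `P` on `ℝ^d`, a measurable score `s : ℝ^d → ℝ^d`, and a measurable
nonnegative spectral density `ρ`, under the stated integrability condition,
`∫∫ [∫ ⟨s(x)+iω, conj(s(x')+iω)⟩ e^{iω·(x−x')} ρ(ω) dω] dP(x) dP(x')
  = ∫ ‖∫ (s(x)+iω) e^{iω·x} dP(x)‖² ρ(ω) dω`,
where the bilinear pairing, conjugation and Hermitian norm on `ℂ^d` are written out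
coordinatewise. -/
theorem ksd_spectral_representation
    (d : ℕ) (P : Measure (EuclideanSpace ℝ (Fin d))) [IsProbabilityMeasure P]
    (s : EuclideanSpace ℝ (Fin d) → EuclideanSpace ℝ (Fin d)) (hs : Measurable s)
    (ρ : EuclideanSpace ℝ (Fin d) → ℝ) (hρ : Measurable ρ) (hρ0 : ∀ ω, 0 ≤ ρ ω)
    (hint : (∫⁻ x, ∫⁻ x', ∫⁻ ω,
        ENNReal.ofReal ((‖s x‖ + ‖ω‖) * (‖s x'‖ + ‖ω‖) * ρ ω) ∂volume ∂P ∂P) < ⊤) :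
    (∫ x, ∫ x', (∫ ω,
        (∑ j : Fin d, ((s x j : ℂ) + Complex.I * (ω j : ℂ))
            * (starRingEnd ℂ) ((s x' j : ℂ) + Complex.I * (ω j : ℂ)))
          * Complex.exp (Complex.I * ((∑ i : Fin d, ω i * (x i - x' i) : ℝ) : ℂ))
          * (ρ ω : ℂ) ∂volume) ∂P ∂P)
    = ((∫ ω, (∑ j : Fin d,
          ‖∫ x, ((s x j : ℂ) + Complex.I * (ω j : ℂ))
              * Complex.exp (Complex.I * ((∑ i : Fin d, ω i * x i : ℝ) : ℂ)) ∂P‖ ^ 2)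
          * ρ ω ∂volume : ℝ) : ℂ) := by
  have hI := integrable_steinTerm hs hρ hρ0 hint
  have hfac : ∀ (j : Fin d) (ω : EuclideanSpace ℝ (Fin d)),
      (∫ z : EuclideanSpace ℝ (Fin d) × EuclideanSpace ℝ (Fin d),
        steinFeature s j z.1 ω * (starRingEnd ℂ) (steinFeature s j z.2 ω) * (ρ ω : ℂ) ∂(P.prod P))
      = ((‖∫ x, steinFeature s j x ω ∂P‖ ^ 2 * ρ ω : ℝ) : ℂ) := by
    intro j ω
    rw [integral_mul_const, integral_prod_mul (fun x => steinFeature s j x ω)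
      (fun x => (starRingEnd ℂ) (steinFeature s j x ω)), integral_conj, Complex.mul_conj']
    push_cast
    rfl
  have hF : Integrable (fun p : (EuclideanSpace ℝ (Fin d) × EuclideanSpace ℝ (Fin d)) ×
      EuclideanSpace ℝ (Fin d) => ∑ j : Fin d,
        steinFeature s j p.1.1 p.2 * (starRingEnd ℂ) (steinFeature s j p.1.2 p.2) * (ρ p.2 : ℂ))
      ((P.prod P).prod volume) := integrable_finsetSum _ fun j _ => hI j
  have hsum : ∀ x x' ω : EuclideanSpace ℝ (Fin d),
      (∑ j : Fin d, ((s x j : ℂ) + Complex.I * (ω j : ℂ))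
            * (starRingEnd ℂ) ((s x' j : ℂ) + Complex.I * (ω j : ℂ)))
          * Complex.exp (Complex.I * ((∑ i : Fin d, ω i * (x i - x' i) : ℝ) : ℂ))
          * (ρ ω : ℂ)
      = ∑ j : Fin d,
        steinFeature s j x ω * (starRingEnd ℂ) (steinFeature s j x' ω) * (ρ ω : ℂ) := by
    intro x x' ω
    simp only [steinFeature_mul_conj, Finset.sum_mul]
  simp only [hsum]
  have hR : ∀ j : Fin d, Integrable
      (fun ω => ((‖∫ x, steinFeature s j x ω ∂P‖ ^ 2 * ρ ω : ℝ) : ℂ)) volume := by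
    intro j
    have := (hI j).integral_prod_right
    simpa only [hfac] using this
  calc _ = ∫ z : EuclideanSpace ℝ (Fin d) × EuclideanSpace ℝ (Fin d), ∫ ω, ∑ j : Fin d,
        steinFeature s j z.1 ω * (starRingEnd ℂ) (steinFeature s j z.2 ω) * (ρ ω : ℂ)
          ∂volume ∂(P.prod P) :=
        (integral_prod _ hF.integral_prod_left).symm
    _ = ∑ j : Fin d, ∫ p : (EuclideanSpace ℝ (Fin d) × EuclideanSpace ℝ (Fin d)) ×
          EuclideanSpace ℝ (Fin d),
          steinFeature s j p.1.1 p.2 * (starRingEnd ℂ) (steinFeature s j p.1.2 p.2) * (ρ p.2 : ℂ)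
          ∂((P.prod P).prod volume) := by
        rw [← integral_finsetSum _ fun j _ => hI j]
        exact (integral_prod _ hF).symm
    _ = ∑ j : Fin d, ∫ ω, ((‖∫ x, steinFeature s j x ω ∂P‖ ^ 2 * ρ ω : ℝ) : ℂ) := by
        refine Finset.sum_congr rfl fun j _ => ?_
        rw [integral_prod_symm _ (hI j)]
        simp only [hfac]
    _ = _ := by
        rw [← integral_finsetSum _ fun j _ => hR j, ← integral_complex_ofReal]
        refine integral_congr_ae (Filter.Eventually.of_forall fun ω => ?_)
        simp only [← Complex.ofReal_sum, ← Finset.sum_mul]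
        rfl
end

section
/- Let d ≥ 2, c ∈ ℝ, and let σ_{d−1} denote the surface measure on the unit sphere S^{d−1} ⊂ ℝ^d. Let e₁ be the first standard basis vector of ℝ^d, and let u, v ∈ ℝ^d be orthogonal to e₁. Then ∫_{S^{d−1}} (θ·u)(θ·v) exp(−c θ₁²) dσ_{d−1}(θ) = (u·v) · (J₁(c) − J₂(c)) / (d − 1), where J₁(c) = ∫_{S^{d−1}} exp(−c θ₁²) dσ_{d−1}(θ) and J₂(c) = ∫_{S^{d−1}} θ₁² exp(−c θ₁²) dσ_{d−1}(θ). -/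
/-!
The surface measure is invariant under linear isometries (`integral_sphere_comp_isometry`).
Consider the second moments `A i j = ∫ θᵢ θⱼ exp(-c θ₁²)`. For `i ≠ 1` and `j ≠ i` the reflection
`θᵢ ↦ -θᵢ` gives `A i j = 0`, and exchanging two coordinates other than the first shows that all
`A i i` with `i ≠ 1` agree. Since `∑ᵢ θᵢ² = 1`, these `d - 1` equal numbers add up to `J₁ - J₂`,
which determines them; expanding `(θ·u)(θ·v)` in coordinates and using `u₁ = 0` concludes.
-/

open MeasureTheory Real

/-- The (unnormalized) surface measure on the unit sphere `S^{d−1} ⊂ ℝ^d`. -/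
noncomputable def sphereSurfaceMeasure (d : ℕ) :
    Measure (Metric.sphere (0 : EuclideanSpace ℝ (Fin d)) 1) :=
  (volume : Measure (EuclideanSpace ℝ (Fin d))).toSphere

/-- `J₁(c) = ∫_{S^{d−1}} exp(−c θ₁²) dσ_{d−1}(θ)`. -/
noncomputable def J1 (d : ℕ) (hd : 2 ≤ d) (c : ℝ) : ℝ :=
  ∫ θ : Metric.sphere (0 : EuclideanSpace ℝ (Fin d)) 1,
    Real.exp (-c * ((θ : EuclideanSpace ℝ (Fin d)) ⟨0, by omega⟩) ^ 2)
    ∂(sphereSurfaceMeasure d)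

/-- `J₂(c) = ∫_{S^{d−1}} θ₁² exp(−c θ₁²) dσ_{d−1}(θ)`. -/
noncomputable def J2 (d : ℕ) (hd : 2 ≤ d) (c : ℝ) : ℝ :=
  ∫ θ : Metric.sphere (0 : EuclideanSpace ℝ (Fin d)) 1,
    ((θ : EuclideanSpace ℝ (Fin d)) ⟨0, by omega⟩) ^ 2
      * Real.exp (-c * ((θ : EuclideanSpace ℝ (Fin d)) ⟨0, by omega⟩) ^ 2)
    ∂(sphereSurfaceMeasure d)

open scoped Pointwise in
/-- The surface measure on the sphere is invariant under linear isometries: `toSphere` of a set is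
`d` times the Lebesgue measure of the cone over it, and linear isometries preserve Lebesgue measure and map
cones to cones. -/
lemma integral_sphere_comp_isometry {d : ℕ}
    (L : EuclideanSpace ℝ (Fin d) ≃ₗᵢ[ℝ] EuclideanSpace ℝ (Fin d))
    (f : EuclideanSpace ℝ (Fin d) → ℝ) :
    ∫ θ : Metric.sphere (0 : EuclideanSpace ℝ (Fin d)) 1, f (L θ) ∂(sphereSurfaceMeasure d)
      = ∫ θ : Metric.sphere (0 : EuclideanSpace ℝ (Fin d)) 1, f θ ∂(sphereSurfaceMeasure d) := by
  have hmem (θ : EuclideanSpace ℝ (Fin d)) :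
      θ ∈ Metric.sphere (0 : EuclideanSpace ℝ (Fin d)) 1 ↔ L θ ∈ Metric.sphere 0 1 := by
    simp
  let T : Metric.sphere (0 : EuclideanSpace ℝ (Fin d)) 1 ≃ₜ
      Metric.sphere (0 : EuclideanSpace ℝ (Fin d)) 1 := L.toHomeomorph.subtype hmem
  have hT : MeasurePreserving T (sphereSurfaceMeasure d) (sphereSurfaceMeasure d) := by
    refine ⟨T.continuous.measurable, ?_⟩
    ext s hs
    rw [Measure.map_apply T.continuous.measurable hs, sphereSurfaceMeasure,
      Measure.toSphere_apply' _ (T.continuous.measurable hs), Measure.toSphere_apply' _ hs,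
      ← L.measurePreserving.measure_preimage_equiv (f := L.toMeasurableEquiv)
        (Set.Ioo (0 : ℝ) 1 • (Subtype.val '' s))]
    congr 2
    ext x
    simp only [Set.mem_smul, Set.mem_image, Set.mem_preimage]
    constructor
    · rintro ⟨r, hr, _, ⟨θ, hθ, rfl⟩, rfl⟩
      exact ⟨r, hr, _, ⟨T θ, hθ, rfl⟩, (L.map_smul r θ).symm⟩
    · rintro ⟨r, hr, _, ⟨θ, hθ, rfl⟩, hx⟩
      refine ⟨r, hr, _, ⟨T.symm θ, by simpa using hθ, rfl⟩, ?_⟩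
      apply L.injective
      have h1 : L (T.symm θ : EuclideanSpace ℝ (Fin d)) = θ :=
        congrArg Subtype.val (T.apply_symm_apply θ)
      rw [L.map_smul, h1]
      exact hx
  exact hT.integral_comp T.measurableEmbedding (fun θ => f θ)

/-- The weighted second moment `∫ θᵢ θⱼ exp(-c θₖ²)` over the sphere. -/
noncomputable def sphereMoment (d : ℕ) (c : ℝ) (k i j : Fin d) : ℝ :=
  ∫ θ : Metric.sphere (0 : EuclideanSpace ℝ (Fin d)) 1,
    (θ : EuclideanSpace ℝ (Fin d)) i * (θ : EuclideanSpace ℝ (Fin d)) j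
      * Real.exp (-c * ((θ : EuclideanSpace ℝ (Fin d)) k) ^ 2) ∂(sphereSurfaceMeasure d)

lemma integrable_sphere_of_continuous {d : ℕ}
    {f : Metric.sphere (0 : EuclideanSpace ℝ (Fin d)) 1 → ℝ} (hf : Continuous f) :
    Integrable f (sphereSurfaceMeasure d) := by
  have : IsFiniteMeasure (sphereSurfaceMeasure d) := by
    unfold sphereSurfaceMeasure; infer_instance
  exact hf.integrable_of_hasCompactSupport (HasCompactSupport.of_compactSpace f)

/-- Off-diagonal moments vanish: the reflection `θᵢ ↦ -θᵢ` changes the sign of the integrand. -/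
lemma sphereMoment_of_ne {d : ℕ} (c : ℝ) {k i j : Fin d} (hik : i ≠ k) (hij : i ≠ j) :
    sphereMoment d c k i j = 0 := by
  let L : EuclideanSpace ℝ (Fin d) ≃ₗᵢ[ℝ] EuclideanSpace ℝ (Fin d) :=
    LinearIsometryEquiv.piLpCongrRight 2
      (fun l => if l = i then LinearIsometryEquiv.neg ℝ else LinearIsometryEquiv.refl ℝ ℝ)
  have hL (x : EuclideanSpace ℝ (Fin d)) (l : Fin d) : L x l = if l = i then -x l else x l := by
    simp only [L, LinearIsometryEquiv.piLpCongrRight_apply]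
    split_ifs <;> simp
  have h := integral_sphere_comp_isometry L (fun x => x i * x j * Real.exp (-c * (x k) ^ 2))
  simp only [hL, if_true, if_neg hik.symm, if_neg hij.symm, neg_mul, integral_neg] at h
  simp only [sphereMoment, neg_mul]
  linarith

/-- Exchanging two coordinates other than `k` shows that their diagonal moments agree. -/
lemma sphereMoment_diag_eq {d : ℕ} (c : ℝ) {k i j : Fin d} (hik : i ≠ k) (hjk : j ≠ k) :
    sphereMoment d c k i i = sphereMoment d c k j j := by
  let L : EuclideanSpace ℝ (Fin d) ≃ₗᵢ[ℝ] EuclideanSpace ℝ (Fin d) :=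
    LinearIsometryEquiv.piLpCongrLeft 2 ℝ ℝ (Equiv.swap i j)
  have hL (x : EuclideanSpace ℝ (Fin d)) (l : Fin d) : L x l = x (Equiv.swap i j l) := by
    simp [L, LinearIsometryEquiv.piLpCongrLeft_apply, Equiv.piCongrLeft']
  have h := integral_sphere_comp_isometry L (fun x => x j * x j * Real.exp (-c * (x k) ^ 2))
  simp only [hL, Equiv.swap_apply_right, Equiv.swap_apply_of_ne_of_ne hik.symm hjk.symm] at h
  exact h

/-- The trace identity: `∑ᵢ θᵢ² = 1` on the sphere. -/
lemma sum_sphereMoment_diag {d : ℕ} (c : ℝ) (k : Fin d) :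
    ∑ i, sphereMoment d c k i i
      = ∫ θ : Metric.sphere (0 : EuclideanSpace ℝ (Fin d)) 1,
          Real.exp (-c * ((θ : EuclideanSpace ℝ (Fin d)) k) ^ 2) ∂(sphereSurfaceMeasure d) := by
  unfold sphereMoment
  rw [← integral_finsetSum _ fun i _ => integrable_sphere_of_continuous (by fun_prop)]
  refine integral_congr_ae (.of_forall fun θ => ?_)
  have h : ‖(θ : EuclideanSpace ℝ (Fin d))‖ ^ 2 = 1 := by simp
  rw [EuclideanSpace.real_norm_sq_eq] at h
  simp only [← Finset.sum_mul, ← pow_two, h, one_mul]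

/-- **Sphere integral of a product of projections orthogonal to `e₁`.**
If `u, v ∈ ℝ^d` are orthogonal to the first basis vector (`u₁ = v₁ = 0`), then
`∫_{S^{d−1}} (θ·u)(θ·v) e^{−cθ₁²} dσ_{d−1}(θ) = (u·v)(J₁(c) − J₂(c))/(d−1)`. -/
theorem sphere_integral_orthogonal_projections
    (d : ℕ) (hd : 2 ≤ d) (c : ℝ) (u v : EuclideanSpace ℝ (Fin d))
    (hu : u ⟨0, by omega⟩ = 0) (hv : v ⟨0, by omega⟩ = 0) :
    (∫ θ : Metric.sphere (0 : EuclideanSpace ℝ (Fin d)) 1,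
        (∑ i, (θ : EuclideanSpace ℝ (Fin d)) i * u i)
          * (∑ i, (θ : EuclideanSpace ℝ (Fin d)) i * v i)
          * Real.exp (-c * ((θ : EuclideanSpace ℝ (Fin d)) ⟨0, by omega⟩) ^ 2)
        ∂(sphereSurfaceMeasure d))
      = (∑ i, u i * v i) * ((J1 d hd c - J2 d hd c) / ((d : ℝ) - 1)) := by
  have hJ2 : J2 d hd c = sphereMoment d c ⟨0, by omega⟩ ⟨0, by omega⟩ ⟨0, by omega⟩ := by
    simp only [J2, sphereMoment, pow_two]
  have hJ1 : J1 d hd c = ∑ i, sphereMoment d c ⟨0, by omega⟩ i i :=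
    (sum_sphereMoment_diag c _).symm
  generalize (⟨0, by omega⟩ : Fin d) = k at *
  have hd1 : (d : ℝ) - 1 ≠ 0 := by
    have : (2 : ℝ) ≤ d := by exact_mod_cast hd
    linarith
  have hdiag (i : Fin d) (hi : i ≠ k) :
      sphereMoment d c k i i = (J1 d hd c - J2 d hd c) / ((d : ℝ) - 1) := by
    have hsum : ∑ j ∈ Finset.univ.erase k, sphereMoment d c k j j
        = ((d : ℝ) - 1) * sphereMoment d c k i i := by
      rw [Finset.sum_congr rfl fun j hj => sphereMoment_diag_eq c (Finset.ne_of_mem_erase hj) hi]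
      rw [Finset.sum_const, Finset.card_erase_of_mem (Finset.mem_univ k), Finset.card_univ,
        Fintype.card_fin, nsmul_eq_mul, Nat.cast_sub (by omega), Nat.cast_one]
    rw [eq_div_iff hd1, hJ1, hJ2, ← Finset.add_sum_erase _ _ (Finset.mem_univ k), hsum]
    ring
  have hexpand : (∫ θ : Metric.sphere (0 : EuclideanSpace ℝ (Fin d)) 1,
        (∑ i, (θ : EuclideanSpace ℝ (Fin d)) i * u i)
          * (∑ i, (θ : EuclideanSpace ℝ (Fin d)) i * v i)
          * Real.exp (-c * ((θ : EuclideanSpace ℝ (Fin d)) k) ^ 2)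
        ∂(sphereSurfaceMeasure d))
      = ∑ i, ∑ j, u i * v j * sphereMoment d c k i j := by
    simp_rw [Finset.sum_mul_sum, Finset.sum_mul]
    rw [integral_finsetSum _ fun i _ => integrable_sphere_of_continuous (by fun_prop)]
    refine Finset.sum_congr rfl fun i _ => ?_
    rw [integral_finsetSum _ fun j _ => integrable_sphere_of_continuous (by fun_prop)]
    refine Finset.sum_congr rfl fun j _ => ?_
    rw [sphereMoment, ← integral_const_mul]
    congr 1 with θ
    ring
  rw [hexpand, Finset.sum_mul]
  refine Finset.sum_congr rfl fun i _ => ?_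
  by_cases hi : i = k
  · subst hi
    simp [hu]
  · rw [Finset.sum_eq_single i, hdiag i hi]
    · intro j _ hji
      rw [sphereMoment_of_ne c hi hji.symm, mul_zero]
    · simp
end

section
/- Let d ≥ 2, γ > 0, and let σ_{d−1} denote the surface measure on the unit sphere S^{d−1} ⊂ ℝ^d. Then for every δ ∈ ℝ^d, ∫_{S^{d−1}} (θ·δ)² exp(−γ (θ·δ)²) dσ_{d−1}(θ) = ‖δ‖² · (π^{d/2} / Γ(d/2 + 1)) · M(3/2; d/2 + 1; −γ‖δ‖²), where M(3/2; d/2+1; −c) = (Γ(d/2+1) / (Γ(3/2) Γ((d−1)/2))) ∫₀¹ t^{1/2} (1−t)^{(d−3)/2} e^{−ct} dt is Kummer's confluent hypergeometric function. -/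
/-!
Write `s = ⟨θ, δ⟩` and `c = γ ‖δ‖²`. Both sides are power series in `γ`, and they agree term by term.

* Expanding the exponential, `∫ w e^{-g} = ∑ₖ (-1)ᵏ/k! ∫ w gᵏ` whenever `w` is integrable and `g` is
  bounded (`hasSum_integral_mul_exp_neg`). This applies to the sphere, with `w = s²` and `g = γ s²`,
  and to `(0, 1]`, with `w = t^{1/2} (1 - t)^{(d-3)/2}` and `g = c t`.
* On `(0, 1]` the coefficients are beta integrals (`integrableOn_and_integral_beta`).
* On the sphere the coefficients are the even moments `∫ s^{2m} dσ`, computed in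
  `integral_sphere_inner_pow`: in polar coordinates, the Gaussian moment
  `∫ ⟨x, δ⟩^{2m} e^{-‖x‖²} dx` over `ℝ^d` is the spherical moment times a radial Gamma integral. By
  rotation invariance the same Gaussian moment is a product of one-dimensional integrals
  (`integral_inner_pow_mul_exp_neg_norm_sq`).
-/

open MeasureTheory Real

/-- Kummer's confluent hypergeometric function at a negated argument:
`kummerM a b c = M(a; b; −c) = (Γ(b)/(Γ(a)Γ(b−a))) ∫₀¹ t^{a−1}(1−t)^{b−a−1} e^{−ct} dt`
(Euler integral representation, valid for `b > a > 0`). -/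
noncomputable def kummerM (a b c : ℝ) : ℝ :=
  (Real.Gamma b / (Real.Gamma a * Real.Gamma (b - a)))
    * ∫ t in (0 : ℝ)..1, t ^ (a - 1) * (1 - t) ^ (b - a - 1) * Real.exp (-c * t)

/-- Termwise integration of the exponential series, by dominated convergence. -/
theorem hasSum_integral_mul_exp_neg {X : Type*} [MeasurableSpace X] {μ : Measure X}
    {w g : X → ℝ} {C : ℝ} (hw : Integrable w μ) (hg : AEStronglyMeasurable g μ)
    (hC : ∀ᵐ x ∂μ, |g x| ≤ C) :
    HasSum (fun k : ℕ => (-1) ^ k / (k.factorial : ℝ) * ∫ x, w x * g x ^ k ∂μ)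
      (∫ x, w x * Real.exp (-g x) ∂μ) := by
  have key : HasSum (fun k : ℕ => ∫ x, (-1) ^ k / (k.factorial : ℝ) * (w x * g x ^ k) ∂μ)
      (∫ x, w x * Real.exp (-g x) ∂μ) := by
    refine hasSum_integral_of_dominated_convergence
      (fun k x => ‖w x‖ * (C ^ k / (k.factorial : ℝ))) (fun k => ?_) (fun k => ?_) ?_ ?_ ?_
    · exact (hw.aestronglyMeasurable.mul (hg.pow k)).const_mul _
    · filter_upwards [hC] with x hx
      have : |g x| ^ k ≤ C ^ k := pow_le_pow_left₀ (abs_nonneg _) hx k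
      rw [norm_mul, norm_mul, norm_div, norm_pow, norm_pow]
      simp only [norm_neg, norm_one, one_pow, Real.norm_eq_abs, Nat.abs_cast]
      calc 1 / (k.factorial : ℝ) * (|w x| * |g x| ^ k)
          ≤ 1 / (k.factorial : ℝ) * (|w x| * C ^ k) := by gcongr
        _ = _ := by ring
    · filter_upwards with x
      exact (Real.summable_pow_div_factorial C).mul_left _
    · simp_rw [tsum_mul_left]
      exact hw.norm.mul_const _
    · filter_upwards with x
      have h := (NormedSpace.expSeries_div_hasSum_exp (𝔸 := ℝ) (-g x)).mul_left (w x)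
      rw [← Real.exp_eq_exp_ℝ] at h
      have hfun : (fun k : ℕ => (-1) ^ k / (k.factorial : ℝ) * (w x * g x ^ k))
          = fun k : ℕ => w x * ((-g x) ^ k / (k.factorial : ℝ)) := by
        funext k
        rw [neg_pow (g x)]; ring
      rw [hfun]
      exact h
  simpa only [integral_const_mul] using key

theorem integral_pow_mul_exp_neg_sq_Ioi (n : ℕ) :
    ∫ x in Set.Ioi (0 : ℝ), x ^ n * Real.exp (-x ^ 2) = Real.Gamma (((n : ℝ) + 1) / 2) / 2 := by
  have h := integral_rpow_mul_exp_neg_rpow (p := 2) (q := n) (by norm_num)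
    (by linarith [(Nat.cast_nonneg n : (0 : ℝ) ≤ n)])
  simp only [Real.rpow_natCast, Real.rpow_ofNat] at h
  rw [h]; ring

theorem integral_even_pow_mul_exp_neg_sq (m : ℕ) :
    ∫ x : ℝ, x ^ (2 * m) * Real.exp (-x ^ 2) = Real.Gamma ((m : ℝ) + 1 / 2) := by
  have h := integral_comp_abs (f := fun x : ℝ => x ^ (2 * m) * Real.exp (-x ^ 2))
  simp only [pow_mul, sq_abs] at h
  simp only [pow_mul]
  rw [h]
  have h2 := integral_pow_mul_exp_neg_sq_Ioi (2 * m)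
  simp only [pow_mul] at h2
  rw [h2, show (((2 * m : ℕ) : ℝ) + 1) / 2 = (m : ℝ) + 1 / 2 by push_cast; ring]
  ring

/-- The real form of Euler's beta integral, together with its convergence. -/
theorem integrableOn_and_integral_beta {a b : ℝ} (ha : 0 < a) (hb : 0 < b) :
    IntegrableOn (fun t : ℝ => t ^ (a - 1) * (1 - t) ^ (b - 1)) (Set.Ioc 0 1) ∧
    ∫ t in Set.Ioc (0 : ℝ) 1, t ^ (a - 1) * (1 - t) ^ (b - 1)
      = Real.Gamma a * Real.Gamma b / Real.Gamma (a + b) := by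
  have hI := (intervalIntegrable_iff_integrableOn_Ioc_of_le zero_le_one).1
    (Complex.betaIntegral_convergent (u := a) (v := b) (by simpa) (by simpa))
  have hE : Set.EqOn (fun t : ℝ => (t : ℂ) ^ ((a : ℂ) - 1) * (1 - (t : ℂ)) ^ ((b : ℂ) - 1))
      (fun t : ℝ => ((t ^ (a - 1) * (1 - t) ^ (b - 1) : ℝ) : ℂ)) (Set.Ioc 0 1) := by
    intro t ht
    simp only
    rw [Complex.ofReal_mul, Complex.ofReal_cpow ht.1.le, Complex.ofReal_cpow (by linarith [ht.2])]
    push_cast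
    rfl
  have hI' := (integrableOn_congr_fun hE measurableSet_Ioc).1 hI
  refine ⟨by simpa [IntegrableOn] using hI'.re, ?_⟩
  have h := Complex.betaIntegral_eq_Gamma_mul_div (a : ℂ) b (by simpa) (by simpa)
  rw [Complex.betaIntegral, intervalIntegral.integral_of_le zero_le_one,
    setIntegral_congr_fun measurableSet_Ioc hE, integral_complex_ofReal, ← Complex.ofReal_add,
    Complex.Gamma_ofReal, Complex.Gamma_ofReal, Complex.Gamma_ofReal] at h
  exact_mod_cast h

/-- Gaussian moments of a linear functional. A reflection carries `δ` to `‖δ‖ e₀`, after which the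
integral splits into a product over the coordinates. -/
theorem integral_inner_pow_mul_exp_neg_norm_sq {d : ℕ} (hd : 2 ≤ d) (m : ℕ)
    (δ : EuclideanSpace ℝ (Fin d)) :
    ∫ x : EuclideanSpace ℝ (Fin d), (inner ℝ x δ) ^ (2 * m) * Real.exp (-‖x‖ ^ 2)
      = ‖δ‖ ^ (2 * m) * Real.Gamma ((m : ℝ) + 1 / 2) * √π ^ (d - 1) := by
  obtain ⟨n, rfl⟩ : ∃ n, d = n + 1 := ⟨d - 1, by omega⟩
  set e : EuclideanSpace ℝ (Fin (n + 1)) := EuclideanSpace.single 0 ‖δ‖ with he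
  have hnorm : ‖δ‖ = ‖e‖ := by simp [he]
  set R := (Submodule.span ℝ {δ - e})ᗮ.reflection
  have hR : R δ = e := Submodule.reflection_sub hnorm
  have h1 := R.measurePreserving.integral_comp R.toHomeomorph.measurableEmbedding
    (fun x => (inner ℝ x e) ^ (2 * m) * Real.exp (-‖x‖ ^ 2))
  simp only [← hR, LinearIsometryEquiv.inner_map_map, LinearIsometryEquiv.norm_map] at h1
  rw [h1, hR, ← (PiLp.volume_preserving_toLp (Fin (n + 1))).integral_comp
    (MeasurableEquiv.toLp 2 _).measurableEmbedding]
  have h2 : ∀ x : Fin (n + 1) → ℝ,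
      (inner ℝ (WithLp.toLp 2 x) e) ^ (2 * m) * Real.exp (-‖WithLp.toLp 2 x‖ ^ 2)
      = ‖δ‖ ^ (2 * m) * ∏ i, (Fin.cons (fun t : ℝ => t ^ (2 * m) * Real.exp (-t ^ 2))
          (fun _ t => Real.exp (-t ^ 2)) : Fin (n + 1) → ℝ → ℝ) i (x i) := by
    intro x
    rw [Fin.prod_univ_succ]
    simp only [Fin.cons_zero, Fin.cons_succ, EuclideanSpace.norm_sq_eq, he]
    rw [← Real.exp_sum, Fin.sum_univ_succ, Finset.sum_neg_distrib, neg_add, Real.exp_add]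
    simp [EuclideanSpace.inner_single_right]
    ring
  simp only [h2]
  rw [integral_const_mul, integral_fintype_prod_volume_eq_prod, Fin.prod_univ_succ]
  have h3 := integral_gaussian 1
  simp at h3
  simp [h3, integral_even_pow_mul_exp_neg_sq]
  ring

/-- Even moments of a linear functional on the unit sphere: the Gaussian moment on `ℝ^d` divided by
its radial factor `Γ(m + d/2) / 2`. -/
theorem integral_sphere_inner_pow {d : ℕ} (hd : 2 ≤ d) (m : ℕ) (δ : EuclideanSpace ℝ (Fin d)) :
    ∫ θ, (inner ℝ (θ : EuclideanSpace ℝ (Fin d)) δ) ^ (2 * m) ∂(sphereSurfaceMeasure d)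
      = 2 * √π ^ (d - 1) * ‖δ‖ ^ (2 * m) * Real.Gamma ((m : ℝ) + 1 / 2)
        / Real.Gamma ((m : ℝ) + d / 2) := by
  have hfin : Module.finrank ℝ (EuclideanSpace ℝ (Fin d)) = d := by simp
  have hpolar : ∫ x : EuclideanSpace ℝ (Fin d), (inner ℝ x δ) ^ (2 * m) * Real.exp (-‖x‖ ^ 2)
      = (∫ θ, (inner ℝ (θ : EuclideanSpace ℝ (Fin d)) δ) ^ (2 * m) ∂(sphereSurfaceMeasure d))
        * ∫ r in Set.Ioi (0 : ℝ), r ^ (2 * m + (d - 1)) * Real.exp (-r ^ 2) := by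
    have : Nontrivial (EuclideanSpace ℝ (Fin d)) :=
      Module.nontrivial_of_finrank_pos (R := ℝ) (by omega)
    let vol : Measure (EuclideanSpace ℝ (Fin d)) := volume
    calc
      _ = ∫ x : ({0}ᶜ : Set (EuclideanSpace ℝ (Fin d))),
            (inner ℝ x.1 δ) ^ (2 * m) * Real.exp (-‖x.1‖ ^ 2) ∂(vol.comap (↑)) := by
        rw [integral_subtype_comap (measurableSet_singleton _).compl
          fun x : EuclideanSpace ℝ (Fin d) => (inner ℝ x δ) ^ (2 * m) * Real.exp (-‖x‖ ^ 2),
          restrict_compl_singleton]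
      _ = ∫ z, (inner ℝ (z.1 : EuclideanSpace ℝ (Fin d)) δ) ^ (2 * m)
              * ((z.2 : ℝ) ^ (2 * m) * Real.exp (-(z.2 : ℝ) ^ 2))
            ∂(vol.toSphere.prod (.volumeIoiPow (d - 1))) := by
        have h := vol.measurePreserving_homeomorphUnitSphereProd.integral_comp
          (Homeomorph.measurableEmbedding _)
          (fun z => (inner ℝ (z.1 : EuclideanSpace ℝ (Fin d)) δ) ^ (2 * m)
              * ((z.2 : ℝ) ^ (2 * m) * Real.exp (-(z.2 : ℝ) ^ 2)))
        rw [hfin] at h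
        rw [← h]
        refine integral_congr_ae (.of_forall fun x => ?_)
        have hx : ‖x.1‖ ≠ 0 := norm_ne_zero_iff.2 x.2
        simp only [homeomorphUnitSphereProd_apply_fst_coe, homeomorphUnitSphereProd_apply_snd_coe,
          real_inner_smul_left, mul_pow, inv_pow]
        field_simp
      _ = (∫ θ, (inner ℝ (θ : EuclideanSpace ℝ (Fin d)) δ) ^ (2 * m) ∂(sphereSurfaceMeasure d))
          * ∫ r : Set.Ioi (0 : ℝ), (r : ℝ) ^ (2 * m) * Real.exp (-(r : ℝ) ^ 2)
            ∂(.volumeIoiPow (d - 1)) :=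
        integral_prod_mul
          (fun θ : Metric.sphere (0 : EuclideanSpace ℝ (Fin d)) 1 =>
            (inner ℝ (θ : EuclideanSpace ℝ (Fin d)) δ) ^ (2 * m))
          (fun r : Set.Ioi (0 : ℝ) => (r : ℝ) ^ (2 * m) * Real.exp (-(r : ℝ) ^ 2))
      _ = _ := by
        congr 1
        simp only [Measure.volumeIoiPow, ENNReal.ofReal]
        rw [integral_withDensity_eq_integral_smul
            ((measurable_subtype_coe.pow_const _).real_toNNReal),
          integral_subtype_comap measurableSet_Ioi fun a : ℝ =>
            Real.toNNReal (a ^ (d - 1)) • (a ^ (2 * m) * Real.exp (-a ^ 2))]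
        refine setIntegral_congr_fun measurableSet_Ioi fun x hx => ?_
        rw [NNReal.smul_def, Real.coe_toNNReal _ (pow_nonneg hx.out.le _), smul_eq_mul]
        ring
  have hΓ : ((2 * m + (d - 1) : ℕ) + 1 : ℝ) / 2 = (m : ℝ) + d / 2 := by
    push_cast [Nat.cast_sub (show 1 ≤ d by omega)]
    ring
  have hpos : 0 < Real.Gamma ((m : ℝ) + d / 2) := by
    refine Real.Gamma_pos_of_pos ?_
    have : (2 : ℝ) ≤ d := by exact_mod_cast hd
    positivity
  rw [integral_inner_pow_mul_exp_neg_norm_sq hd, integral_pow_mul_exp_neg_sq_Ioi, hΓ] at hpolar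
  rw [eq_div_iff hpos.ne']
  linear_combination -2 * hpolar

/-- **Sphere integral of `(θ·δ)² exp(−γ(θ·δ)²)`.**
For every `δ ∈ ℝ^d`,
`∫_{S^{d−1}} (θ·δ)² e^{−γ(θ·δ)²} dσ_{d−1}(θ)
  = ‖δ‖² (π^{d/2}/Γ(d/2+1)) M(3/2; d/2+1; −γ‖δ‖²)`. -/
theorem sphere_integral_sq_projection
    (d : ℕ) (hd : 2 ≤ d) (γ : ℝ) (hγ : 0 < γ) (δ : EuclideanSpace ℝ (Fin d)) :
    (∫ θ : Metric.sphere (0 : EuclideanSpace ℝ (Fin d)) 1,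
        (∑ i, (θ : EuclideanSpace ℝ (Fin d)) i * δ i) ^ 2
          * Real.exp (-γ * (∑ i, (θ : EuclideanSpace ℝ (Fin d)) i * δ i) ^ 2)
        ∂(sphereSurfaceMeasure d))
      = ‖δ‖ ^ 2 * (Real.pi ^ ((d : ℝ) / 2) / Real.Gamma ((d : ℝ) / 2 + 1))
          * kummerM (3 / 2) ((d : ℝ) / 2 + 1) (γ * ‖δ‖ ^ 2) := by
  have hd' : (2 : ℝ) ≤ d := by exact_mod_cast hd
  have hinner : ∀ x : EuclideanSpace ℝ (Fin d), ∑ i, x i * δ i = inner ℝ x δ := fun x => by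
    simp [PiLp.inner_apply, mul_comm]
  simp only [hinner]
  set c : ℝ := γ * ‖δ‖ ^ 2 with hc
  have : IsFiniteMeasure (sphereSurfaceMeasure d) := by
    unfold sphereSurfaceMeasure; infer_instance
  have hbound : ∀ θ : Metric.sphere (0 : EuclideanSpace ℝ (Fin d)) 1,
      (inner ℝ (θ : EuclideanSpace ℝ (Fin d)) δ) ^ 2 ≤ ‖δ‖ ^ 2 := fun θ => by
    have h := abs_real_inner_le_norm (θ : EuclideanSpace ℝ (Fin d)) δ
    rw [norm_eq_of_mem_sphere, one_mul] at h
    exact sq_le_sq' (abs_le.1 h).1 (abs_le.1 h).2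
  have hcont : Continuous fun θ : Metric.sphere (0 : EuclideanSpace ℝ (Fin d)) 1 =>
      (inner ℝ (θ : EuclideanSpace ℝ (Fin d)) δ) ^ 2 := by fun_prop
  have hL := hasSum_integral_mul_exp_neg (μ := sphereSurfaceMeasure d) (C := c)
    (w := fun θ => (inner ℝ (θ : EuclideanSpace ℝ (Fin d)) δ) ^ 2)
    (g := fun θ => γ * (inner ℝ (θ : EuclideanSpace ℝ (Fin d)) δ) ^ 2)
    (Integrable.of_bound hcont.aestronglyMeasurable (‖δ‖ ^ 2) (.of_forall fun θ => by
      simpa using hbound θ))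
    (hcont.aestronglyMeasurable.const_mul γ) (.of_forall fun θ => by
      rw [abs_of_nonneg (by positivity)]
      exact mul_le_mul_of_nonneg_left (hbound θ) hγ.le)
  have hb : 0 < ((d : ℝ) - 1) / 2 := by linarith
  have hR := hasSum_integral_mul_exp_neg (μ := volume.restrict (Set.Ioc (0 : ℝ) 1)) (C := c)
    (w := fun t : ℝ => t ^ ((3 / 2 : ℝ) - 1) * (1 - t) ^ (((d : ℝ) - 1) / 2 - 1))
    (g := fun t => c * t)
    (integrableOn_and_integral_beta (by norm_num) hb).1 (by fun_prop)
    (by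
      filter_upwards [ae_restrict_mem measurableSet_Ioc] with t ht
      have hc0 : 0 ≤ c := by positivity
      rw [abs_of_nonneg (mul_nonneg hc0 ht.1.le)]
      exact mul_le_of_le_one_right hc0 ht.2)
  have hmoment : ∀ k : ℕ, ∫ t in Set.Ioc (0 : ℝ) 1,
      t ^ ((3 / 2 : ℝ) - 1) * (1 - t) ^ (((d : ℝ) - 1) / 2 - 1) * (c * t) ^ k
      = c ^ k * (Real.Gamma (k + 3 / 2) * Real.Gamma (((d : ℝ) - 1) / 2)
        / Real.Gamma ((k : ℝ) + 3 / 2 + ((d : ℝ) - 1) / 2)) := fun k => by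
    rw [← (integrableOn_and_integral_beta (by positivity) hb).2, ← integral_const_mul]
    refine setIntegral_congr_fun measurableSet_Ioc fun t ht => ?_
    rw [show (k : ℝ) + 3 / 2 - 1 = (3 / 2 - 1) + k by ring, Real.rpow_add ht.1,
      Real.rpow_natCast]
    ring
  have hΓ32 : Real.Gamma (3 / 2) = √π / 2 := by
    rw [show (3 / 2 : ℝ) = 1 / 2 + 1 by norm_num, Real.Gamma_add_one (by norm_num),
      Real.Gamma_one_half_eq]
    ring
  have hπ : π ^ ((d : ℝ) / 2) = √π ^ (d - 1) * √π := by
    rw [← pow_succ, Nat.sub_add_cancel (by omega), Real.sqrt_eq_rpow, ← Real.rpow_natCast,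
      ← Real.rpow_mul pi_pos.le]
    congr 1; ring
  have hΓb := (Real.Gamma_pos_of_pos hb).ne'
  have hΓd := (Real.Gamma_pos_of_pos (show 0 < (d : ℝ) / 2 + 1 by positivity)).ne'
  have hsπ : √π ≠ 0 := (Real.sqrt_pos.2 pi_pos).ne'
  -- The factor is the right-hand side's constant after cancelling `Γ(d/2 + 1)` and inserting
  -- `Γ(3/2) = √π / 2`.
  have hR' := hR.mul_left (‖δ‖ ^ 2 * (2 * √π ^ (d - 1)) / Real.Gamma (((d : ℝ) - 1) / 2))
  have heq := hL.tsum_eq.symm.trans ((tsum_congr fun k => ?_).trans hR'.tsum_eq)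
  · simp only [← neg_mul] at heq
    rw [heq, kummerM, intervalIntegral.integral_of_le zero_le_one,
      show (d : ℝ) / 2 + 1 - 3 / 2 = ((d : ℝ) - 1) / 2 by ring, hΓ32, hπ]
    generalize (∫ t in Set.Ioc (0 : ℝ) 1,
      t ^ ((3 / 2 : ℝ) - 1) * (1 - t) ^ (((d : ℝ) - 1) / 2 - 1) * Real.exp (-c * t)) = J
    field_simp
  · have hs := integral_sphere_inner_pow hd (k + 1) δ
    have hpull : ∫ θ, (inner ℝ (θ : EuclideanSpace ℝ (Fin d)) δ) ^ 2
          * (γ * (inner ℝ (θ : EuclideanSpace ℝ (Fin d)) δ) ^ 2) ^ k ∂(sphereSurfaceMeasure d)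
        = γ ^ k * ∫ θ, (inner ℝ (θ : EuclideanSpace ℝ (Fin d)) δ) ^ (2 * (k + 1))
          ∂(sphereSurfaceMeasure d) := by
      rw [← integral_const_mul]
      congr 1 with θ
      ring
    rw [hmoment, hpull, hs, hc]
    push_cast
    rw [show (k : ℝ) + 1 + 1 / 2 = k + 3 / 2 by ring,
      show (k : ℝ) + 3 / 2 + ((d : ℝ) - 1) / 2 = k + 1 + d / 2 by ring]
    field_simp
    ring
end

section
/- Let d ≥ 2, γ, σ > 0, and let U denote the uniform probability measure on the unit sphere S^{d−1} ⊂ ℝ^d. Then for every x ∈ ℝ^d, ∫_{S^{d−1}} ∫_ℝ exp(−γ (θ·x − y)²) dN(0, σ²)(y) dU(θ) = (1 + 2γσ²)^{−1/2} · M(1/2; d/2; −γ‖x‖²/(1 + 2γσ²)), where M denotes Kummer's confluent hypergeometric function. (This is the cross term E_{y~N(0,σ²I_d)}[k_C(x, y)] for the sphere-averaged kernel k_C, giving the unbiased non-sliced estimator of the SIGReg regularizer.) -/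
/-!
Completing the square turns the inner Gaussian integral into
`(1 + 2γσ²)^{-1/2} exp(-c ⟪x, θ⟫²)` with `c = γ / (1 + 2γσ²)` (`gaussian_smoothing`), so it
remains to average `exp(-c ⟪x, θ⟫²)` over the sphere (`sphere_average`).

The moments `∫ ⟪x, θ⟫^{2n} dU(θ)` are found by computing `∫ ⟪x, z⟫^{2n} exp(-‖z‖²) dz` over `ℝ^d`
in two ways: in polar coordinates (`polar_moment`), and in an orthonormal basis whose first vector
is along `x` (`gaussian_moment`). This gives
`‖x‖^{2n} Γ(n + 1/2) Γ(d/2) / (Γ(1/2) Γ(n + d/2))` (`sphere_moment`), which up to the factor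
`‖x‖^{2n}` is the `n`-th moment of the Beta distribution with parameters `1/2` and `(d - 1)/2`
(`integral_beta`), the probability weight in Euler's integral for `M(1/2; d/2; ·)`. Expanding the
exponential and integrating termwise on both sides (`hasSum_weighted_exp`) concludes.
-/

open MeasureTheory ProbabilityTheory Real

/-- The uniform (rotation-invariant) probability measure on the unit sphere
`S^{d−1} ⊂ ℝ^d`, obtained by normalizing the surface measure. -/
noncomputable def uniformSphere (d : ℕ) :
    Measure (Metric.sphere (0 : EuclideanSpace ℝ (Fin d)) 1) :=
  ((volume : Measure (EuclideanSpace ℝ (Fin d))).toSphere Set.univ)⁻¹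
    • (volume : Measure (EuclideanSpace ℝ (Fin d))).toSphere

/-- Averaging a Gaussian bump over a centred normal law of variance `v = σ²` gives a wider
Gaussian bump. -/
lemma gaussian_smoothing (γ σ s : ℝ) (hγ : 0 < γ) (hσ : 0 < σ) (v : NNReal)
    (hvσ : (v : ℝ) = σ ^ 2) :
    ∫ y : ℝ, Real.exp (-γ * (s - y) ^ 2) ∂(gaussianReal 0 v)
      = (1 + 2 * γ * σ ^ 2) ^ (-(1 : ℝ) / 2)
        * Real.exp (-(γ / (1 + 2 * γ * σ ^ 2)) * s ^ 2) := by
  have hv : v ≠ 0 := by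
    rw [← NNReal.coe_ne_zero, hvσ]
    positivity
  have hD : 0 < 1 + 2 * γ * σ ^ 2 := by positivity
  -- Completing the square in the joint exponent.
  have hsq : ∀ y : ℝ, gaussianPDFReal 0 v y • Real.exp (-γ * (s - y) ^ 2)
      = ((√(2 * π * σ ^ 2))⁻¹ * Real.exp (-(γ / (1 + 2 * γ * σ ^ 2)) * s ^ 2))
        * Real.exp (-((1 + 2 * γ * σ ^ 2) / (2 * σ ^ 2))
            * (y - 2 * γ * σ ^ 2 * s / (1 + 2 * γ * σ ^ 2)) ^ 2) := by
    intro y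
    rw [gaussianPDFReal, hvσ, smul_eq_mul, mul_assoc, mul_assoc _ (Real.exp _), ← Real.exp_add, ← Real.exp_add]
    congr 2
    field_simp
    ring
  rw [integral_gaussianReal_eq_integral_smul hv]
  simp_rw [hsq]
  rw [integral_const_mul,
    integral_sub_right_eq_self (fun y : ℝ =>
      Real.exp (-((1 + 2 * γ * σ ^ 2) / (2 * σ ^ 2)) * y ^ 2)),
    integral_gaussian, mul_right_comm]
  congr 1
  rw [neg_div, Real.rpow_neg hD.le, ← Real.sqrt_eq_rpow, ← Real.sqrt_inv,
    ← Real.sqrt_mul (by positivity), ← Real.sqrt_inv]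
  congr 1
  field_simp

/-- Termwise integration of the exponential series of a bounded function `s` against an
integrable weight `w`. -/
lemma hasSum_weighted_exp {α : Type*} [MeasurableSpace α] (μ : Measure α) (w s : α → ℝ)
    (hw : Integrable w μ) (hs : AEStronglyMeasurable s μ) (K : ℝ)
    (hK : ∀ᵐ a ∂μ, |s a| ≤ K) :
    HasSum (fun n : ℕ => ∫ a, w a * (s a ^ n / n.factorial) ∂μ)
      (∫ a, w a * Real.exp (s a) ∂μ) := by
  have hexp : ∀ t : ℝ, HasSum (fun n : ℕ => t ^ n / n.factorial) (Real.exp t) := fun t => by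
    rw [Real.exp_eq_exp_ℝ]; exact NormedSpace.expSeries_div_hasSum_exp t
  refine hasSum_integral_of_dominated_convergence
    (fun n a => |w a| * (K ^ n / n.factorial)) (fun n => ?_) (fun n => ?_) ?_ ?_ ?_
  · exact hw.aestronglyMeasurable.mul ((continuous_id.pow n).div_const _ |>.comp_aestronglyMeasurable hs)
  · filter_upwards [hK] with a ha
    rw [Real.norm_eq_abs, abs_mul, abs_div, abs_pow, Nat.abs_cast]
    gcongr
  · exact .of_forall fun a => ((hexp K).mul_left _).summable
  · simp_rw [fun a => ((hexp K).mul_left |w a|).tsum_eq]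
    exact hw.abs.mul_const _
  · exact .of_forall fun a => (hexp (s a)).mul_left _

/-- On `(0, 1]` the complex Beta integrand with real parameters is real; this transfers
integrability and the value of `Complex.betaIntegral` to the real integral. -/
lemma beta_integrand_ofReal (a b t : ℝ) (ht : t ∈ Set.Ioc (0 : ℝ) 1) :
    (t : ℂ) ^ ((a : ℂ) - 1) * (1 - (t : ℂ)) ^ ((b : ℂ) - 1)
      = ((t ^ (a - 1) * (1 - t) ^ (b - 1) : ℝ) : ℂ) := by
  rw [Complex.ofReal_mul, Complex.ofReal_cpow ht.1.le, Complex.ofReal_cpow (sub_nonneg.2 ht.2)]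
  push_cast
  rfl

lemma beta_integrable {a b : ℝ} (ha : 0 < a) (hb : 0 < b) :
    Integrable (fun t : ℝ => t ^ (a - 1) * (1 - t) ^ (b - 1))
      (volume.restrict (Set.Ioc (0 : ℝ) 1)) := by
  have h := Complex.betaIntegral_convergent (u := a) (v := b) (by simpa) (by simpa)
  rw [intervalIntegrable_iff_integrableOn_Ioc_of_le zero_le_one] at h
  refine (Integrable.re h).congr ?_
  filter_upwards [ae_restrict_mem measurableSet_Ioc] with t ht
  rw [beta_integrand_ofReal a b t ht]
  simp

lemma integral_beta {a b : ℝ} (ha : 0 < a) (hb : 0 < b) :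
    ∫ t in Set.Ioc (0 : ℝ) 1, t ^ (a - 1) * (1 - t) ^ (b - 1)
      = Gamma a * Gamma b / Gamma (a + b) := by
  have h := Complex.betaIntegral_eq_Gamma_mul_div a b (by simpa) (by simpa)
  rw [Complex.betaIntegral, intervalIntegral.integral_of_le zero_le_one,
    setIntegral_congr_fun measurableSet_Ioc (fun t ht => beta_integrand_ofReal a b t ht),
    integral_complex_ofReal] at h
  rw [← Complex.ofReal_add, Complex.Gamma_ofReal, Complex.Gamma_ofReal, Complex.Gamma_ofReal] at h
  exact_mod_cast h

lemma integral_pow_exp_neg_sq_Ioi (m : ℕ) :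
    ∫ r in Set.Ioi (0 : ℝ), r ^ m * Real.exp (-r ^ 2) = 1 / 2 * Gamma (((m : ℝ) + 1) / 2) := by
  have h := integral_rpow_mul_exp_neg_rpow (p := 2) (q := m) two_pos
    (by have : (0 : ℝ) ≤ m := by positivity
        linarith)
  simpa only [Real.rpow_natCast, Real.rpow_two] using h

lemma integral_even_pow_exp_neg_sq (n : ℕ) :
    ∫ r : ℝ, r ^ (2 * n) * Real.exp (-r ^ 2) = Gamma ((n : ℝ) + 1 / 2) := by
  have h := integral_comp_abs (f := fun r : ℝ => r ^ (2 * n) * Real.exp (-r ^ 2))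
  simp only [pow_mul, sq_abs] at h ⊢
  rw [h]
  have h2 := integral_pow_exp_neg_sq_Ioi (2 * n)
  simp only [pow_mul] at h2
  rw [h2, ← mul_assoc]
  norm_num
  congr 1
  ring

/-- Every vector is a nonnegative multiple of the first vector of some orthonormal basis. -/
lemma exists_basis_first {d : ℕ} [NeZero d] (x : EuclideanSpace ℝ (Fin d)) :
    ∃ b : OrthonormalBasis (Fin d) ℝ (EuclideanSpace ℝ (Fin d)), x = ‖x‖ • b 0 := by
  by_cases hx : x = 0
  · exact ⟨EuclideanSpace.basisFun _ _, by simp [hx]⟩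
  have hx' : ‖x‖ ≠ 0 := norm_ne_zero_iff.2 hx
  have ho : Orthonormal ℝ (({0} : Set (Fin d)).domRestrict
      (fun _ => ‖x‖⁻¹ • x)) := by
    refine ⟨fun i => ?_, fun i j hij => absurd (Subsingleton.elim i j) hij⟩
    simp [norm_smul, hx']
  obtain ⟨b, hb⟩ := ho.exists_orthonormalBasis_extension_of_card_eq (by simp)
  exact ⟨b, by rw [hb 0 rfl, smul_inv_smul₀ hx']⟩

/-- By rotation invariance `x` may be taken along the first coordinate axis, where the integral
splits into one-dimensional Gaussian integrals. -/
lemma gaussian_moment {d : ℕ} [NeZero d] (x : EuclideanSpace ℝ (Fin d)) (n : ℕ) :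
    ∫ z : EuclideanSpace ℝ (Fin d), (inner ℝ x z) ^ (2 * n) * Real.exp (-‖z‖ ^ 2)
      = ‖x‖ ^ (2 * n) * Gamma ((n : ℝ) + 1 / 2) * √π ^ (d - 1) := by
  obtain ⟨b, hb⟩ := exists_basis_first x
  have h1 : ∀ z : EuclideanSpace ℝ (Fin d),
      (inner ℝ x z) ^ (2 * n) * Real.exp (-‖z‖ ^ 2)
      = (fun u : EuclideanSpace ℝ (Fin d) =>
          ‖x‖ ^ (2 * n) * (u 0 ^ (2 * n) * Real.exp (-‖u‖ ^ 2))) (b.repr z) := by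
    intro z
    have : inner ℝ x z = ‖x‖ * b.repr z 0 := by
      conv_lhs => rw [hb]
      rw [real_inner_smul_left, b.repr_apply_apply]
    simp only [this, LinearIsometryEquiv.norm_map]
    ring
  have hrot := b.measurePreserving_repr.integral_comp b.repr.toHomeomorph.measurableEmbedding
    (fun u : EuclideanSpace ℝ (Fin d) =>
          ‖x‖ ^ (2 * n) * (u 0 ^ (2 * n) * Real.exp (-‖u‖ ^ 2)))
  refine (integral_congr_ae (.of_forall h1)).trans (hrot.trans ?_)
  rw [integral_const_mul, mul_assoc]
  congr 1
  have h2 : ∀ u : EuclideanSpace ℝ (Fin d),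
      u 0 ^ (2 * n) * Real.exp (-‖u‖ ^ 2)
      = (fun v : Fin d → ℝ => ∏ i, (if i = 0 then v i ^ (2 * n) else 1) * Real.exp (-(v i) ^ 2))
          (WithLp.ofLp u) := by
    intro u
    simp only [Finset.prod_mul_distrib, ← Real.exp_sum, EuclideanSpace.norm_sq_eq,
      Finset.prod_ite_eq', Finset.mem_univ, if_true, Real.norm_eq_abs, sq_abs,
      Finset.sum_neg_distrib]
  have hpi := (PiLp.volume_preserving_ofLp (Fin d)).integral_comp
    (MeasurableEquiv.toLp 2 (Fin d → ℝ)).symm.measurableEmbedding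
    (fun v : Fin d → ℝ => ∏ i, (if i = 0 then v i ^ (2 * n) else 1) * Real.exp (-(v i) ^ 2))
  refine (integral_congr_ae (.of_forall h2)).trans (hpi.trans ?_)
  rw [integral_fintype_prod_volume_eq_prod
      (fun i (t : ℝ) => (if i = 0 then t ^ (2 * n) else 1) * Real.exp (-t ^ 2)),
    ← Finset.mul_prod_erase _ _ (Finset.mem_univ (0 : Fin d))]
  congr 1
  · simpa using integral_even_pow_exp_neg_sq n
  · rw [Finset.prod_congr rfl (g := fun _ => √π)]
    · simp [Finset.card_erase_of_mem]
    · intro i hi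
      simpa [Finset.ne_of_mem_erase hi] using integral_gaussian 1

/-- The Gaussian moment in polar coordinates: a spherical moment times a radial Gamma
integral. -/
lemma polar_moment {E : Type*} [NormedAddCommGroup E] [InnerProductSpace ℝ E]
    [FiniteDimensional ℝ E] [Nontrivial E] [MeasurableSpace E] [BorelSpace E]
    (μ : Measure E) [μ.IsAddHaarMeasure] (x : E) (n : ℕ) :
    ∫ z : E, (inner ℝ x z) ^ (2 * n) * Real.exp (-‖z‖ ^ 2) ∂μ
      = (∫ θ : Metric.sphere (0 : E) 1, (inner ℝ x (θ : E)) ^ (2 * n) ∂μ.toSphere)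
        * (1 / 2 * Gamma ((n : ℝ) + (Module.finrank ℝ E : ℝ) / 2)) := by
  have hd : 1 ≤ Module.finrank ℝ E := Module.finrank_pos
  calc
    _ = ∫ z : ({(0 : E)}ᶜ : Set E), (inner ℝ x z.1) ^ (2 * n) * Real.exp (-‖z.1‖ ^ 2)
          ∂(μ.comap (↑)) := by
      rw [integral_subtype_comap (measurableSet_singleton _).compl
        fun z : E => (inner ℝ x z) ^ (2 * n) * Real.exp (-‖z‖ ^ 2), restrict_compl_singleton]
    _ = ∫ p : Metric.sphere (0 : E) 1 × Set.Ioi (0 : ℝ),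
          (inner ℝ x p.1.1) ^ (2 * n) * (p.2.1 ^ (2 * n) * Real.exp (-p.2.1 ^ 2))
          ∂μ.toSphere.prod (.volumeIoiPow (Module.finrank ℝ E - 1)) := by
      rw [← μ.measurePreserving_homeomorphUnitSphereProd.integral_comp
        (Homeomorph.measurableEmbedding _)]
      refine integral_congr_ae (.of_forall fun z => ?_)
      have hz : ‖z.1‖ ≠ 0 := norm_ne_zero_iff.2 z.2
      simp only [homeomorphUnitSphereProd_apply_fst_coe, homeomorphUnitSphereProd_apply_snd_coe,
        real_inner_smul_right]
      rw [← mul_assoc, ← mul_pow]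
      congr 2
      field_simp
    _ = _ := by
      rw [integral_prod_mul (fun θ : Metric.sphere (0 : E) 1 => (inner ℝ x θ.1) ^ (2 * n))
        (fun r : Set.Ioi (0 : ℝ) => r.1 ^ (2 * n) * Real.exp (-r.1 ^ 2))]
      congr 1
      simp only [Measure.volumeIoiPow, ENNReal.ofReal]
      rw [integral_withDensity_eq_integral_smul (by fun_prop), integral_subtype_comap measurableSet_Ioi
        fun a : ℝ => Real.toNNReal (a ^ (Module.finrank ℝ E - 1)) •
          (a ^ (2 * n) * Real.exp (-a ^ 2)),
        setIntegral_congr_fun (g := fun r => r ^ (2 * n + (Module.finrank ℝ E - 1)) * Real.exp (-r ^ 2))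
          measurableSet_Ioi, integral_pow_exp_neg_sq_Ioi]
      · push_cast [hd]
        ring_nf
      · intro r hr
        have : (0 : ℝ) ≤ r ^ (Module.finrank ℝ E - 1) := pow_nonneg (le_of_lt hr) _
        simp only [NNReal.smul_def, Real.coe_toNNReal _ this, smul_eq_mul]
        ring

/-- The even moments of `⟪x, θ⟫` for `θ` uniform on the sphere. They come from comparing
`polar_moment` with `gaussian_moment`; the case `n = 0` supplies the total surface area. -/
lemma sphere_moment {d : ℕ} [NeZero d] (x : EuclideanSpace ℝ (Fin d)) (n : ℕ) :
    ∫ θ, (inner ℝ x (θ : EuclideanSpace ℝ (Fin d))) ^ (2 * n) ∂(uniformSphere d)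
      = ‖x‖ ^ (2 * n) * (Gamma ((n : ℝ) + 1 / 2) * Gamma ((d : ℝ) / 2)
          / (Gamma (1 / 2) * Gamma ((n : ℝ) + (d : ℝ) / 2))) := by
  have hd : (0 : ℝ) < d := Nat.cast_pos.2 (NeZero.pos d)
  have key : ∀ m : ℕ, _ := fun m =>
    (polar_moment (volume : Measure (EuclideanSpace ℝ (Fin d))) x m).symm.trans
      (gaussian_moment x m)
  simp only [finrank_euclideanSpace, Fintype.card_fin] at key
  have h0 := key 0
  have hn := key n
  have g1 : 0 < Gamma ((n : ℝ) + (d : ℝ) / 2) := Gamma_pos_of_pos (by positivity)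
  have g2 : 0 < Gamma ((d : ℝ) / 2) := Gamma_pos_of_pos (by positivity)
  have g3 : 0 < Gamma ((1 : ℝ) / 2) := Gamma_pos_of_pos (by positivity)
  have hp : 0 < √π ^ (d - 1) := by positivity
  simp only [mul_zero, pow_zero, integral_const, smul_eq_mul, mul_one, Nat.cast_zero, zero_add,
    one_mul] at h0
  rw [uniformSphere, integral_smul_measure, ENNReal.toReal_inv, smul_eq_mul]
  rw [measureReal_def] at h0
  set T := ((volume : Measure (EuclideanSpace ℝ (Fin d))).toSphere Set.univ).toReal
  set A := ∫ θ : Metric.sphere (0 : EuclideanSpace ℝ (Fin d)) 1,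
    (inner ℝ x (θ : EuclideanSpace ℝ (Fin d))) ^ (2 * n)
      ∂(volume : Measure (EuclideanSpace ℝ (Fin d))).toSphere
  have hT : T = Gamma (1 / 2) * √π ^ (d - 1) * 2 / Gamma ((d : ℝ) / 2) := by
    rw [eq_div_iff g2.ne']; linarith
  have hA : A = ‖x‖ ^ (2 * n) * Gamma ((n : ℝ) + 1 / 2) * √π ^ (d - 1) * 2
      / Gamma ((n : ℝ) + (d : ℝ) / 2) := by
    rw [eq_div_iff g1.ne']; linarith
  rw [hT, hA]
  field_simp

instance uniformSphere_finite {d : ℕ} : IsFiniteMeasure (uniformSphere d) := by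
  rw [uniformSphere]
  by_cases h : (volume : Measure (EuclideanSpace ℝ (Fin d))).toSphere = 0
  · rw [h]; simp only [smul_zero]; infer_instance
  · exact Measure.smul_finite _ (ENNReal.inv_ne_top.2 (Measure.measure_univ_ne_zero.2 h))

/-- Both sides have the same power series in `c`, because `⟪x, θ⟫² / ‖x‖²` has the moments of
the Beta distribution with parameters `1/2` and `(d - 1)/2`. -/
lemma sphere_average {d : ℕ} (hd : 2 ≤ d) (c : ℝ) (hc : 0 ≤ c) (x : EuclideanSpace ℝ (Fin d)) :
    ∫ θ, Real.exp (-c * (inner ℝ x (θ : EuclideanSpace ℝ (Fin d))) ^ 2) ∂(uniformSphere d)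
      = kummerM (1 / 2) ((d : ℝ) / 2) (c * ‖x‖ ^ 2) := by
  have : NeZero d := ⟨by omega⟩
  have hd' : (2 : ℝ) ≤ d := by exact_mod_cast hd
  have hb : 0 < (d : ℝ) / 2 - 1 / 2 := by linarith
  have g2 : 0 < Gamma ((d : ℝ) / 2) := Gamma_pos_of_pos (by positivity)
  have g3 : 0 < Gamma ((1 : ℝ) / 2) := Gamma_pos_of_pos (by positivity)
  have g4 : 0 < Gamma ((d : ℝ) / 2 - 1 / 2) := Gamma_pos_of_pos hb
  have hL := hasSum_weighted_exp (uniformSphere d) (fun _ => 1)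
    (fun θ => -c * (inner ℝ x (θ : EuclideanSpace ℝ (Fin d))) ^ 2)
    (integrable_const _) (Continuous.aestronglyMeasurable (by fun_prop)) (c * ‖x‖ ^ 2)
    (.of_forall fun θ => by
      have h1 : |inner ℝ x (θ : EuclideanSpace ℝ (Fin d))| ≤ ‖x‖ := by
        simpa using abs_real_inner_le_norm x (θ : EuclideanSpace ℝ (Fin d))
      rw [abs_mul, abs_neg, abs_of_nonneg hc, abs_pow]
      gcongr)
  have hR := (hasSum_weighted_exp (volume.restrict (Set.Ioc (0 : ℝ) 1))
    (fun t => t ^ ((1 : ℝ) / 2 - 1) * (1 - t) ^ ((d : ℝ) / 2 - 1 / 2 - 1))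
    (fun t => -(c * ‖x‖ ^ 2) * t) (beta_integrable (by norm_num) hb)
    (Continuous.aestronglyMeasurable (by fun_prop)) (c * ‖x‖ ^ 2)
    (by
      filter_upwards [ae_restrict_mem measurableSet_Ioc] with t ht
      rw [abs_mul, abs_neg, abs_of_nonneg (by positivity), abs_of_pos ht.1]
      exact mul_le_of_le_one_right (by positivity) ht.2)).mul_left
    (Gamma ((d : ℝ) / 2) / (Gamma (1 / 2) * Gamma ((d : ℝ) / 2 - 1 / 2)))
  rw [kummerM, intervalIntegral.integral_of_le zero_le_one]
  simp only [one_mul] at hL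
  refine hL.unique (hR.congr_fun fun n => ?_)
  have hl : ∀ θ : Metric.sphere (0 : EuclideanSpace ℝ (Fin d)) 1,
      (-c * (inner ℝ x (θ : EuclideanSpace ℝ (Fin d))) ^ 2) ^ n / (n.factorial : ℝ)
      = ((-c) ^ n / n.factorial) * (inner ℝ x (θ : EuclideanSpace ℝ (Fin d))) ^ (2 * n) := by
    intro θ
    rw [mul_pow, ← pow_mul]
    ring
  have hr : ∀ t ∈ Set.Ioc (0 : ℝ) 1,
      t ^ ((1 : ℝ) / 2 - 1) * (1 - t) ^ ((d : ℝ) / 2 - 1 / 2 - 1)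
          * ((-(c * ‖x‖ ^ 2) * t) ^ n / (n.factorial : ℝ))
      = ((-c) ^ n / n.factorial * ‖x‖ ^ (2 * n))
        * (t ^ ((n : ℝ) + 1 / 2 - 1) * (1 - t) ^ ((d : ℝ) / 2 - 1 / 2 - 1)) := by
    intro t ht
    rw [add_sub_assoc, Real.rpow_add ht.1, Real.rpow_natCast, mul_pow, ← neg_mul, mul_pow, pow_mul]
    ring
  simp_rw [hl]
  rw [integral_const_mul, sphere_moment, setIntegral_congr_fun measurableSet_Ioc hr,
    integral_const_mul, integral_beta (by positivity) hb,
    show (n : ℝ) + 1 / 2 + ((d : ℝ) / 2 - 1 / 2) = n + (d : ℝ) / 2 by ring]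
  have g1 : 0 < Gamma ((n : ℝ) + (d : ℝ) / 2) := Gamma_pos_of_pos (by positivity)
  generalize Gamma ((d : ℝ) / 2 - 1 / 2) = G at g4
  field_simp

/-- **Cross term of the sphere-averaged Gaussian kernel against a Gaussian prior.**
For every `x ∈ ℝ^d`,
`∫_{S^{d−1}} ∫_ℝ exp(−γ(θ·x − y)²) dN(0,σ²)(y) dU(θ)
  = (1+2γσ²)^{−1/2} M(1/2; d/2; −γ‖x‖²/(1+2γσ²))`. -/
theorem sphere_averaged_gaussian_cross_term
    (d : ℕ) (hd : 2 ≤ d) (γ σ : ℝ) (hγ : 0 < γ) (hσ : 0 < σ)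
    (x : EuclideanSpace ℝ (Fin d)) :
    (∫ θ : Metric.sphere (0 : EuclideanSpace ℝ (Fin d)) 1,
        (∫ y : ℝ,
          Real.exp (-γ * ((∑ i, (θ : EuclideanSpace ℝ (Fin d)) i * x i) - y) ^ 2)
          ∂(gaussianReal 0 ⟨σ ^ 2, sq_nonneg σ⟩))
      ∂(uniformSphere d))
    = (1 + 2 * γ * σ ^ 2) ^ (-(1 : ℝ) / 2)
        * kummerM (1 / 2) ((d : ℝ) / 2) (γ * ‖x‖ ^ 2 / (1 + 2 * γ * σ ^ 2)) := by
  have hinner : ∀ θ : EuclideanSpace ℝ (Fin d), ∑ i, θ i * x i = inner ℝ x θ := fun θ => by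
    simp [PiLp.inner_apply]
  refine (integral_congr_ae (.of_forall fun θ =>
    gaussian_smoothing γ σ _ hγ hσ ⟨σ ^ 2, sq_nonneg σ⟩ rfl)).trans ?_
  simp_rw [hinner]
  rw [integral_const_mul, sphere_average hd _ (by positivity), div_mul_eq_mul_div]
end

section
/- Let d ≥ 2. Then lim_{c → ∞} √c · ∫₀¹ t^{−1/2} (1−t)^{(d−3)/2} e^{−ct} dt = √π; equivalently, lim_{c → ∞} √c · M(1/2; d/2; −c) = Γ(d/2)/Γ((d−1)/2), where M(1/2; d/2; −c) = (Γ(d/2)/(Γ(1/2)Γ((d−1)/2))) ∫₀¹ t^{−1/2}(1−t)^{(d−3)/2} e^{−ct} dt. In particular, the sphere-averaged kernel k_C(x,y) = M(1/2; d/2; −γ‖x−y‖²) decays polynomially, like Γ(d/2)/(Γ((d−1)/2) √γ ‖x−y‖) as ‖x−y‖ → ∞, rather than exponentially. -/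
/-!
This is the leading order of Watson's lemma, seen as an approximate-identity statement. Put
`φ(s) = s^{-1/2} e^{-s} / √π` for `s > 0` and `φ(s) = 0` otherwise; it is a probability density
because `Γ(1/2) = √π`. For `c > 0` one has `√c · t^{-1/2} e^{-ct} / √π = c φ(ct)`, so the integral
under study is, up to the factor `√π`, the average of `t ↦ (1 - t)^{(d-3)/2}` (cut off to
`(-1, 1]`) against a kernel concentrating at `0`, where that function is continuous with value `1`.
It is integrable because `(d - 3)/2 > -1`. The two statements on `M` follow by multiplying by the
Gamma prefactor and by substituting `c = γ r²`.
-/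

open Real Filter

open MeasureTheory Set Topology

/-- The Gamma(1/2, 1) probability density `s^{-1/2} e^{-s} / √π` on `(0, ∞)`, extended by zero. -/
noncomputable def halfGammaDensity (s : ℝ) : ℝ :=
  (Ioi (0 : ℝ)).indicator (fun s => (√π)⁻¹ * (s ^ (-(1 : ℝ) / 2) * Real.exp (-s))) s

/-- The weight `(1 - t)^β`, cut off to `(-1, 1]`; the cutoff leaves a neighbourhood of the
concentration point `0` untouched. -/
noncomputable def truncWeight (β t : ℝ) : ℝ :=
  (Ioc (-1 : ℝ) 1).indicator (fun t => (1 - t) ^ β) t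

lemma halfGammaDensity_nonneg (s : ℝ) : 0 ≤ halfGammaDensity s := by
  unfold halfGammaDensity
  refine indicator_nonneg (fun s hs => ?_) s
  have : (0 : ℝ) < s := hs
  positivity

lemma integral_halfGammaDensity : ∫ s, halfGammaDensity s = 1 := by
  unfold halfGammaDensity
  rw [integral_indicator measurableSet_Ioi, integral_const_mul]
  have h := Real.integral_rpow_mul_exp_neg_mul_Ioi (a := 1 / 2) (r := 1) (by norm_num) one_pos
  have h' : ∫ s in Ioi (0 : ℝ), s ^ (-(1 : ℝ) / 2) * Real.exp (-s) = √π := by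
    rw [Real.Gamma_one_half_eq] at h
    norm_num at h ⊢
    exact h
  rw [h']
  exact inv_mul_cancel₀ (by positivity)

/-- The decay condition on the density required of the profile of an approximate identity. -/
lemma tendsto_norm_mul_halfGammaDensity :
    Tendsto (fun x : ℝ => ‖x‖ ^ Module.finrank ℝ ℝ * halfGammaDensity x)
      (Bornology.cobounded ℝ) (𝓝 0) := by
  have h := (tendsto_rpow_mul_exp_neg_mul_atTop_nhds_zero (1 / 2) 1 one_pos).const_mul (√π)⁻¹
  rw [mul_zero] at h
  rw [IsOrderBornology.cobounded_eq, tendsto_sup]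
  constructor
  · refine tendsto_const_nhds.congr' ?_
    filter_upwards [eventually_le_atBot (0 : ℝ)] with x hx
    have : x ∉ Ioi (0 : ℝ) := not_lt.2 hx
    simp [halfGammaDensity, this]
  · refine h.congr' ?_
    filter_upwards [eventually_gt_atTop (0 : ℝ)] with x hx
    have hx' : x ∈ Ioi (0 : ℝ) := hx
    have e : x ^ ((1 : ℝ) / 2) = x * x ^ (-(1 : ℝ) / 2) := by
      nth_rewrite 2 [← Real.rpow_one x]
      rw [← Real.rpow_add hx]
      norm_num
    simp only [halfGammaDensity, indicator_of_mem hx', Module.finrank_self, pow_one,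
      Real.norm_eq_abs, abs_of_pos hx, e, neg_mul, one_mul]
    ring

lemma integrable_truncWeight {β : ℝ} (hβ : -1 < β) : Integrable (truncWeight β) := by
  have h : IntervalIntegrable (fun t : ℝ => (1 - t) ^ β) volume (-1) 1 := by
    have := (intervalIntegral.intervalIntegrable_rpow' (a := 2) (b := 0) hβ).comp_sub_left 1
    norm_num at this
    exact this
  rw [intervalIntegrable_iff_integrableOn_Ioc_of_le (by norm_num)] at h
  exact (integrable_indicator_iff measurableSet_Ioc).2 h

lemma continuousAt_truncWeight (β : ℝ) : ContinuousAt (truncWeight β) 0 := by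
  have h : ContinuousAt (fun t : ℝ => (1 - t) ^ β) 0 :=
    ContinuousAt.rpow_const (by fun_prop) (Or.inl (by norm_num))
  refine h.congr ?_
  filter_upwards [Ioo_mem_nhds (a := (-1 : ℝ)) (x := 0) (b := 1) (by norm_num) (by norm_num)]
    with t ht
  exact (indicator_of_mem (Ioo_subset_Ioc_self ht) (fun t : ℝ => (1 - t) ^ β)).symm

/-- Rescaling identity: `c φ(ct) = √c t^{-1/2} e^{-ct} / √π`, so averaging the weight against the
rescaled density gives the Laplace-type integral over `[0, 1]`. -/
lemma integral_rescaled_density (β : ℝ) {c : ℝ} (hc : 0 < c) :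
    ∫ t, (c ^ Module.finrank ℝ ℝ * halfGammaDensity (c • t)) • truncWeight β t
      = (√π)⁻¹ * (√c * ∫ t in (0 : ℝ)..1,
          t ^ (-(1 : ℝ) / 2) * (1 - t) ^ β * Real.exp (-c * t)) := by
  rw [intervalIntegral.integral_of_le zero_le_one, ← integral_const_mul, ← integral_const_mul,
    ← integral_indicator measurableSet_Ioc]
  congr 1
  ext t
  by_cases ht : 0 < t
  · have hct : c * t ∈ Ioi (0 : ℝ) := mul_pos hc ht
    by_cases ht1 : t ≤ 1
    · have h1 : t ∈ Ioc (0 : ℝ) 1 := ⟨ht, ht1⟩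
      have h2 : t ∈ Ioc (-1 : ℝ) 1 := ⟨by linarith, ht1⟩
      have e : √c = c * c ^ (-(1 : ℝ) / 2) := by
        rw [Real.sqrt_eq_rpow]
        nth_rewrite 2 [← Real.rpow_one c]
        rw [← Real.rpow_add hc]
        norm_num
      simp only [halfGammaDensity, truncWeight, smul_eq_mul, indicator_of_mem hct,
        indicator_of_mem h1, indicator_of_mem h2, Module.finrank_self, pow_one, e,
        Real.mul_rpow hc.le ht.le, neg_mul]
      ring
    · have h1 : t ∉ Ioc (0 : ℝ) 1 := fun h => ht1 h.2
      have h2 : t ∉ Ioc (-1 : ℝ) 1 := fun h => ht1 h.2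
      simp only [truncWeight, indicator_of_notMem h1, indicator_of_notMem h2, smul_zero]
  · have h1 : t ∉ Ioc (0 : ℝ) 1 := fun h => ht h.1
    have hct : c * t ∉ Ioi (0 : ℝ) :=
      not_lt.2 (mul_nonpos_of_nonneg_of_nonpos hc.le (not_lt.1 ht))
    simp only [halfGammaDensity, smul_eq_mul, indicator_of_notMem h1, indicator_of_notMem hct,
      mul_zero, zero_mul]

lemma tendsto_sqrt_mul_laplace {β : ℝ} (hβ : -1 < β) :
    Tendsto (fun c : ℝ => √c * ∫ t in (0 : ℝ)..1,
      t ^ (-(1 : ℝ) / 2) * (1 - t) ^ β * Real.exp (-c * t)) atTop (𝓝 (√π)) := by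
  have h := tendsto_integral_comp_smul_smul_of_integrable (μ := (volume : Measure ℝ))
    halfGammaDensity_nonneg integral_halfGammaDensity tendsto_norm_mul_halfGammaDensity
    (integrable_truncWeight hβ) (continuousAt_truncWeight β)
  have h0 : truncWeight β 0 = 1 := by simp [truncWeight]
  rw [h0] at h
  have h2 := h.const_mul (√π)
  rw [mul_one] at h2
  refine h2.congr' ?_
  filter_upwards [eventually_gt_atTop (0 : ℝ)] with c hc
  rw [integral_rescaled_density β hc]
  exact mul_inv_cancel_left₀ (by positivity) _

/-- **Polynomial tail decay of the sphere-averaged Gaussian kernel.**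
`lim_{c→∞} √c ∫₀¹ t^{−1/2}(1−t)^{(d−3)/2} e^{−ct} dt = √π`; equivalently
`lim_{c→∞} √c · M(1/2; d/2; −c) = Γ(d/2)/Γ((d−1)/2)`. In particular, for every `γ > 0`,
`r · M(1/2; d/2; −γr²) → Γ(d/2)/(Γ((d−1)/2)√γ)` as `r → ∞`, so the sphere-averaged kernel
`k_C(x,y) = M(1/2; d/2; −γ‖x−y‖²)` decays like `Γ(d/2)/(Γ((d−1)/2)√γ‖x−y‖)` rather than
exponentially. -/
theorem kummer_tail_asymptotics (d : ℕ) (hd : 2 ≤ d) :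
    (Tendsto (fun c : ℝ => Real.sqrt c
        * ∫ t in (0 : ℝ)..1,
            t ^ (-(1 : ℝ) / 2) * (1 - t) ^ (((d : ℝ) - 3) / 2) * Real.exp (-c * t))
      atTop (nhds (Real.sqrt Real.pi)))
    ∧ (Tendsto (fun c : ℝ => Real.sqrt c * kummerM (1 / 2) ((d : ℝ) / 2) c)
        atTop (nhds (Real.Gamma ((d : ℝ) / 2) / Real.Gamma (((d : ℝ) - 1) / 2))))
    ∧ (∀ γ : ℝ, 0 < γ →
        Tendsto (fun r : ℝ => r * kummerM (1 / 2) ((d : ℝ) / 2) (γ * r ^ 2))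
          atTop (nhds (Real.Gamma ((d : ℝ) / 2)
            / (Real.Gamma (((d : ℝ) - 1) / 2) * Real.sqrt γ)))) := by
  have hd' : (2 : ℝ) ≤ d := by exact_mod_cast hd
  have hG : Real.Gamma (((d : ℝ) - 1) / 2) ≠ 0 := (Real.Gamma_pos_of_pos (by linarith)).ne'
  have hpi : √π ≠ 0 := by positivity
  have h1 := tendsto_sqrt_mul_laplace (β := ((d : ℝ) - 3) / 2) (by linarith)
  have h2 : Tendsto (fun c : ℝ => Real.sqrt c * kummerM (1 / 2) ((d : ℝ) / 2) c)
      atTop (nhds (Real.Gamma ((d : ℝ) / 2) / Real.Gamma (((d : ℝ) - 1) / 2))) := by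
    have h := h1.const_mul
      (Real.Gamma ((d : ℝ) / 2) / (√π * Real.Gamma (((d : ℝ) - 1) / 2)))
    have e : Real.Gamma ((d : ℝ) / 2) / (√π * Real.Gamma (((d : ℝ) - 1) / 2)) * √π
        = Real.Gamma ((d : ℝ) / 2) / Real.Gamma (((d : ℝ) - 1) / 2) := by
      field_simp
    rw [e] at h
    refine h.congr fun c => ?_
    have e1 : (1 : ℝ) / 2 - 1 = -1 / 2 := by norm_num
    have e2 : (d : ℝ) / 2 - 1 / 2 = ((d : ℝ) - 1) / 2 := by ring
    have e3 : ((d : ℝ) - 1) / 2 - 1 = ((d : ℝ) - 3) / 2 := by ring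
    rw [kummerM, e1, e2, e3, Real.Gamma_one_half_eq]
    ring
  refine ⟨h1, h2, fun γ hγ => ?_⟩
  have hγ' : √γ ≠ 0 := (Real.sqrt_pos.2 hγ).ne'
  have hlim : Tendsto (fun r : ℝ => γ * r ^ 2) atTop atTop :=
    (tendsto_pow_atTop two_ne_zero).const_mul_atTop hγ
  have h := (h2.comp hlim).const_mul (√γ)⁻¹
  have e : (√γ)⁻¹ * (Real.Gamma ((d : ℝ) / 2) / Real.Gamma (((d : ℝ) - 1) / 2))
      = Real.Gamma ((d : ℝ) / 2) / (Real.Gamma (((d : ℝ) - 1) / 2) * √γ) := by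
    field_simp
  rw [e] at h
  refine h.congr' ?_
  filter_upwards [eventually_ge_atTop (0 : ℝ)] with r hr
  simp only [Function.comp_apply]
  rw [Real.sqrt_mul hγ.le, Real.sqrt_sq hr]
  field_simp
end
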